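/- Let μ > 0 and let f be a strictly positive classical solution of the BDY PDE on [0,∞) × [0,∞) which is for each t a probability density with mean μ, satisfies the entropy dissipation identity d/dt H[f|f∞](t) = − D[f](t) for all t ≥ 0, and has finite initial relative entropy H[f⁰|f∞] < ∞ where f⁰ = f(·,0). Then there exists a sequence of times τ_k → ∞ such that both the Hellinger distance d_H( f(·,τ_k), f∞ ) → 0 and the L¹ distance ∫₀^∞ | f(v,τ_k) − f∞(v) | dv → 0 as k → ∞. -/

import Mathlib

open MeasureTheory Set Filter

open scoped Topology

/-!
The relative entropy decreases at the rate of the dissipation and is bounded below, so the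
dissipation is integrable in time. Testing the equation against smooth versions of `v ^ 2 / 2` of
linear growth, whose average against `f(·, t)` stays bounded, shows that the time averages of
`f(0, ·)` are asymptotically at most `1 / μ`. Hence there are arbitrarily late times `τ` at which
the dissipation is small and `a = f(0, τ)` is at most `1 / μ + ε`. Small dissipation forces
`√f(·, τ)` to be close to `√a exp(-a v / 2)`; unit mass and the conserved mean then leave `1 / μ`
as the only limit of `a`, so that `f(·, τ)` converges pointwise to the equilibrium. Scheffé's lemma
gives convergence in `L¹`, and `(√x - √y) ^ 2 ≤ |x - y|` convergence in Hellinger distance.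

Two points need care. The derivatives are only assumed to exist pointwise: interior gradient bounds,
obtained from the maximum principle by doubling the space variable, justify differentiating under
the integral sign. And a divergent dissipation integral has the value `0`: localized entropy
identities and Fatou's lemma show that it converges at almost every time.
-/

section MaximumPrinciple

lemma hasDerivAt_nonneg_of_eventually_le_left {g : ℝ → ℝ} {g' x : ℝ} (hg : HasDerivAt g g' x)
    (hle : ∀ᶠ y in 𝓝[<] x, g y ≤ g x) : 0 ≤ g' := by
  refine ge_of_tendsto (hasDerivAt_iff_tendsto_slope_left_right.1 hg).1 ?_
  filter_upwards [hle, self_mem_nhdsWithin] with y hy (hyx : y < x)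
  rw [slope_def_field]
  exact div_nonneg_of_nonpos (sub_nonpos.2 hy) (sub_nonpos.2 hyx.le)

lemma hasDerivAt_nonpos_of_eventually_le_right {g : ℝ → ℝ} {g' x : ℝ} (hg : HasDerivAt g g' x)
    (hle : ∀ᶠ y in 𝓝[>] x, g y ≤ g x) : g' ≤ 0 := by
  refine le_of_tendsto (hasDerivAt_iff_tendsto_slope_left_right.1 hg).2 ?_
  filter_upwards [hle, self_mem_nhdsWithin] with y hy (hyx : x < y)
  rw [slope_def_field]
  exact div_nonpos_of_nonpos_of_nonneg (sub_nonpos.2 hy) (sub_nonneg.2 hyx.le)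

lemma second_hasDerivAt_nonpos_of_isLocalMax {g g₁ : ℝ → ℝ} {g₂ x : ℝ}
    (hg : ∀ᶠ y in 𝓝 x, HasDerivAt g (g₁ y) y) (hg₁ : HasDerivAt g₁ g₂ x)
    (hmax : IsLocalMax g x) : g₂ ≤ 0 := by
  by_contra! hpos
  have hderiv : deriv g =ᶠ[𝓝 x] g₁ := hg.mono fun y hy => hy.deriv
  have hderiv₂ : deriv (deriv g) x = g₂ := by rw [hderiv.deriv_eq, hg₁.deriv]
  have hmin : IsLocalMin g x := isLocalMin_of_deriv_deriv_pos (hderiv₂.symm ▸ hpos)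
    hmax.deriv_eq_zero hg.self_of_nhds.continuousAt
  have hconst : g =ᶠ[𝓝 x] fun _ => g x := by
    filter_upwards [hmin, hmax] with y h₁ h₂ using le_antisymm h₂ h₁
  have : deriv (deriv g) x = 0 := by simpa using hconst.deriv.deriv_eq
  exact hpos.ne' (hderiv₂ ▸ this)

lemma nonpos_of_lt_drift_diffusion {W Wc Wd Wdd Wt b : ℝ → ℝ → ℝ → ℝ} {c₁ c₂ d₁ d₂ t₁ t₂ : ℝ}
    (hW : ContinuousOn (fun p : ℝ × ℝ × ℝ => W p.1 p.2.1 p.2.2)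
      (Icc c₁ c₂ ×ˢ Icc d₁ d₂ ×ˢ Icc t₁ t₂))
    (hbdry : ∀ c ∈ Icc c₁ c₂, ∀ d ∈ Icc d₁ d₂, ∀ t ∈ Icc t₁ t₂,
      (c = c₁ ∨ c = c₂ ∨ d = d₁ ∨ d = d₂ ∨ t = t₁) → W c d t ≤ 0)
    (hc : ∀ c ∈ Ioo c₁ c₂, ∀ d ∈ Ioo d₁ d₂, ∀ t ∈ Ioc t₁ t₂,
      HasDerivAt (fun x => W x d t) (Wc c d t) c)
    (hd : ∀ c ∈ Ioo c₁ c₂, ∀ d ∈ Ioo d₁ d₂, ∀ t ∈ Ioc t₁ t₂,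
      HasDerivAt (fun x => W c x t) (Wd c d t) d)
    (hdd : ∀ c ∈ Ioo c₁ c₂, ∀ d ∈ Ioo d₁ d₂, ∀ t ∈ Ioc t₁ t₂,
      HasDerivAt (fun x => Wd c x t) (Wdd c d t) d)
    (ht : ∀ c ∈ Ioo c₁ c₂, ∀ d ∈ Ioo d₁ d₂, ∀ t ∈ Ioc t₁ t₂,
      HasDerivAt (fun x => W c d x) (Wt c d t) t)
    (hlt : ∀ c ∈ Ioo c₁ c₂, ∀ d ∈ Ioo d₁ d₂, ∀ t ∈ Ioc t₁ t₂,
      Wt c d t < Wdd c d t + b c d t * Wc c d t) :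
    ∀ c ∈ Icc c₁ c₂, ∀ d ∈ Icc d₁ d₂, ∀ t ∈ Icc t₁ t₂, W c d t ≤ 0 := by
  intro c₀ hc₀ d₀ hd₀ t₀ ht₀
  obtain ⟨⟨c, d, t⟩, ⟨hcm, hdm, htm⟩, hmax⟩ :=
    (isCompact_Icc.prod (isCompact_Icc.prod isCompact_Icc)).exists_isMaxOn
      ⟨(c₀, d₀, t₀), hc₀, hd₀, ht₀⟩ hW
  have hle : ∀ x ∈ Icc c₁ c₂, ∀ y ∈ Icc d₁ d₂, ∀ s ∈ Icc t₁ t₂, W x y s ≤ W c d t :=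
    fun x hx y hy s hs => hmax (a := (x, y, s)) ⟨hx, hy, hs⟩
  refine (hle c₀ hc₀ d₀ hd₀ t₀ ht₀).trans ?_
  by_cases hb : c = c₁ ∨ c = c₂ ∨ d = d₁ ∨ d = d₂ ∨ t = t₁
  · exact hbdry c hcm d hdm t htm hb
  push Not at hb
  obtain ⟨hb₁, hb₂, hb₃, hb₄, hb₅⟩ := hb
  have hci : c ∈ Ioo c₁ c₂ := ⟨hcm.1.lt_of_ne' hb₁, hcm.2.lt_of_ne hb₂⟩
  have hdi : d ∈ Ioo d₁ d₂ := ⟨hdm.1.lt_of_ne' hb₃, hdm.2.lt_of_ne hb₄⟩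
  have hti : t ∈ Ioc t₁ t₂ := ⟨htm.1.lt_of_ne' hb₅, htm.2⟩
  have hWc : Wc c d t = 0 := by
    refine IsLocalMax.hasDerivAt_eq_zero ?_ (hc c hci d hdi t hti)
    filter_upwards [Icc_mem_nhds hci.1 hci.2] with x hx using hle x hx d hdm t htm
  have hWdd : Wdd c d t ≤ 0 := by
    refine second_hasDerivAt_nonpos_of_isLocalMax (g := fun x => W c x t) ?_
      (hdd c hci d hdi t hti) ?_
    · filter_upwards [Ioo_mem_nhds hdi.1 hdi.2] with x hx using hd c hci x hx t hti
    · filter_upwards [Icc_mem_nhds hdi.1 hdi.2] with x hx using hle c hcm x hx t htm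
  have hWt : 0 ≤ Wt c d t := by
    refine hasDerivAt_nonneg_of_eventually_le_left (ht c hci d hdi t hti) ?_
    filter_upwards [Ioo_mem_nhdsLT hti.1] with x hx
      using hle c hcm d hdm x ⟨hx.1.le, hx.2.le.trans hti.2⟩
  have := hlt c hci d hdi t hti
  rw [hWc, mul_zero, add_zero] at this
  linarith

end MaximumPrinciple

section InteriorEstimates

/-- A classical solution of the drift–diffusion equation `u_t = u_xx + a(t) u_x` on `X × T`. The
functions `ux`, `uxx`, `ut` are the partial derivatives of `u`; only their pointwise existence is
required, not their continuity. -/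
structure IsDriftHeatSolutionOn (a : ℝ → ℝ) (u ux uxx ut : ℝ → ℝ → ℝ) (X T : Set ℝ) : Prop where
  continuousOn : ContinuousOn (fun p : ℝ × ℝ => u p.1 p.2) (X ×ˢ T)
  hasDerivAt_x : ∀ x ∈ X, ∀ t ∈ T, HasDerivAt (fun y => u y t) (ux x t) x
  hasDerivAt_xx : ∀ x ∈ X, ∀ t ∈ T, HasDerivAt (fun y => ux y t) (uxx x t) x
  hasDerivAt_t : ∀ x ∈ X, ∀ t ∈ T, HasDerivAt (fun s => u x s) (ut x t) t
  equation : ∀ x ∈ X, ∀ t ∈ T, ut x t = uxx x t + a t * ux x t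

/-- The barrier of the doubling argument for interior gradient bounds; `τ` is the time elapsed
before the final time of the cylinder. The coefficient of `d * (r - d)` is chosen such that
`∂_d² barrier + a ∂_c barrier < -∂_τ barrier` whenever `|a| ≤ A`. -/
noncomputable def gradientBarrier (r s A c d τ : ℝ) : ℝ :=
  c ^ 2 / r ^ 2 + τ / s + d / r + (1 / s + 2 * A / r + 1) * (d * (r - d)) / 2

/-- The constant of the interior gradient bound, which is the slope of the barrier at `d = 0`. -/
noncomputable def gradientBound (r s A : ℝ) : ℝ :=
  1 / r + (1 / s + 2 * A / r + 1) * r / 2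

variable {a : ℝ → ℝ} {u ux uxx ut : ℝ → ℝ → ℝ} {X T K L : Set ℝ} {x₀ t₀ r s A M : ℝ}

lemma gradientBound_pos (hr : 0 < r) (hs : 0 < s) (hA : 0 ≤ A) : 0 < gradientBound r s A := by
  unfold gradientBound
  positivity

lemma gradientBarrier_nonneg (hr : 0 < r) (hs : 0 < s) (hA : 0 ≤ A) {c d τ : ℝ}
    (hd : d ∈ Icc 0 r) (hτ : 0 ≤ τ) : 0 ≤ gradientBarrier r s A c d τ := by
  have := mul_nonneg hd.1 (sub_nonneg.2 hd.2)
  have := hd.1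
  unfold gradientBarrier
  positivity

lemma one_le_gradientBarrier (hr : 0 < r) (hs : 0 < s) (hA : 0 ≤ A) {c d τ : ℝ}
    (hd : d ∈ Icc 0 r) (hτ : 0 ≤ τ) (hbdry : c ^ 2 = r ^ 2 ∨ d = r ∨ τ = s) :
    1 ≤ gradientBarrier r s A c d τ := by
  have h₁ := hd.1
  have h₂ := mul_nonneg hd.1 (sub_nonneg.2 hd.2)
  have hc : 0 ≤ c ^ 2 / r ^ 2 := by positivity
  have ht : 0 ≤ τ / s := by positivity
  have hdr : 0 ≤ d / r := by positivity
  have hdd : 0 ≤ (1 / s + 2 * A / r + 1) * (d * (r - d)) / 2 := by positivity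
  have hone : c ^ 2 / r ^ 2 = 1 ∨ d / r = 1 ∨ τ / s = 1 :=
    hbdry.imp (fun h => by rw [h, div_self (by positivity)])
      (Or.imp (fun h => by rw [h, div_self hr.ne']) fun h => by rw [h, div_self hs.ne'])
  unfold gradientBarrier
  rcases hone with h | h | h <;> linarith

lemma sub_le_gradientBarrier_of_boundary (hr : 0 < r) (hs : 0 < s) (hA : 0 ≤ A) {p q c d τ : ℝ}
    (hp : |p| ≤ M) (hq : |q| ≤ M) (hd : d ∈ Icc 0 r) (hτ : 0 ≤ τ) (hpq : d = 0 → p = q)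
    (hbdry : c = -r ∨ c = r ∨ d = 0 ∨ d = r ∨ τ = s) :
    p - q ≤ 2 * M * gradientBarrier r s A c d τ := by
  have hM : 0 ≤ M := (abs_nonneg p).trans hp
  by_cases hd₀ : d = 0
  · have := gradientBarrier_nonneg hr hs hA (c := c) hd hτ
    rw [hpq hd₀, sub_self]
    positivity
  · have hone : 1 ≤ gradientBarrier r s A c d τ := by
      refine one_le_gradientBarrier hr hs hA hd hτ ?_
      rcases hbdry with rfl | rfl | h | h | h
      · exact .inl (neg_sq r)
      · exact .inl rfl
      · exact absurd h hd₀
      · exact .inr (.inl h)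
      · exact .inr (.inr h)
    have := mul_le_mul_of_nonneg_left hone (by positivity : 0 ≤ 2 * M)
    linarith [(abs_le.1 hp).2, (abs_le.1 hq).1]

lemma drift_mul_deriv_gradientBarrier_le (hr : 0 < r) {α c : ℝ} (hα : |α| ≤ A) (hc : |c| ≤ r) :
    α * (2 * c / r ^ 2) ≤ 2 * A / r := by
  have hdrift : α * c ≤ A * r := by
    refine (le_abs_self _).trans ?_
    rw [abs_mul]
    exact mul_le_mul hα hc (abs_nonneg c) ((abs_nonneg α).trans hα)
  calc α * (2 * c / r ^ 2) = 2 * (α * c) / r ^ 2 := by ring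
    _ ≤ 2 * (A * r) / r ^ 2 := by gcongr
    _ = 2 * A / r := by field_simp

lemma continuous_gradientBarrier :
    Continuous fun p : ℝ × ℝ × ℝ => gradientBarrier r s A p.1 p.2.1 (t₀ - p.2.2) := by
  unfold gradientBarrier
  fun_prop

lemma hasDerivAt_gradientBarrier_fst (c d τ : ℝ) :
    HasDerivAt (fun x => gradientBarrier r s A x d τ) (2 * c / r ^ 2) c := by
  unfold gradientBarrier
  simpa using ((((hasDerivAt_id c).pow 2).div_const (r ^ 2)).add_const (τ / s)).add_const (d / r)
    |>.add_const ((1 / s + 2 * A / r + 1) * (d * (r - d)) / 2)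

lemma hasDerivAt_gradientBarrier_snd (c d τ : ℝ) :
    HasDerivAt (fun x => gradientBarrier r s A c x τ)
      (1 / r + (1 / s + 2 * A / r + 1) * (r - 2 * d) / 2) d := by
  have hquad := (hasDerivAt_id d).mul ((hasDerivAt_id d).const_sub r)
  refine ((((hasDerivAt_id d).div_const r).const_add (c ^ 2 / r ^ 2 + τ / s)).add
    ((hquad.const_mul (1 / s + 2 * A / r + 1)).div_const 2)).congr_deriv ?_
  simp only [id]
  ring

lemma hasDerivAt_gradientBarrier_snd_snd (d : ℝ) :
    HasDerivAt (fun x => 1 / r + (1 / s + 2 * A / r + 1) * (r - 2 * x) / 2)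
      (-(1 / s + 2 * A / r + 1)) d := by
  refine ((((((hasDerivAt_id d).const_mul 2).const_sub r).const_mul
    (1 / s + 2 * A / r + 1)).div_const 2).const_add (1 / r)).congr_deriv ?_
  ring

lemma hasDerivAt_gradientBarrier_thd (c d τ : ℝ) :
    HasDerivAt (fun x => gradientBarrier r s A c d x) (1 / s) τ :=
  (((hasDerivAt_id τ).div_const s).const_add (c ^ 2 / r ^ 2)).add_const (d / r)
    |>.add_const ((1 / s + 2 * A / r + 1) * (d * (r - d)) / 2)

namespace IsDriftHeatSolutionOn

lemma mono (h : IsDriftHeatSolutionOn a u ux uxx ut X T) {X' T' : Set ℝ} (hX : X' ⊆ X)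
    (hT : T' ⊆ T) : IsDriftHeatSolutionOn a u ux uxx ut X' T' where
  continuousOn := h.continuousOn.mono (prod_mono hX hT)
  hasDerivAt_x x hx t ht := h.hasDerivAt_x x (hX hx) t (hT ht)
  hasDerivAt_xx x hx t ht := h.hasDerivAt_xx x (hX hx) t (hT ht)
  hasDerivAt_t x hx t ht := h.hasDerivAt_t x (hX hx) t (hT ht)
  equation x hx t ht := h.equation x (hX hx) t (hT ht)

lemma neg (h : IsDriftHeatSolutionOn a u ux uxx ut X T) :
    IsDriftHeatSolutionOn a (fun x t => -u x t) (fun x t => -ux x t) (fun x t => -uxx x t)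
      (fun x t => -ut x t) X T where
  continuousOn := h.continuousOn.neg
  hasDerivAt_x x hx t ht := (h.hasDerivAt_x x hx t ht).neg
  hasDerivAt_xx x hx t ht := (h.hasDerivAt_xx x hx t ht).neg
  hasDerivAt_t x hx t ht := (h.hasDerivAt_t x hx t ht).neg
  equation x hx t ht := by rw [h.equation x hx t ht]; ring

lemma diffQuot (h : IsDriftHeatSolutionOn a u ux uxx ut X T) (k : ℝ) {X' : Set ℝ} (hX : X' ⊆ X)
    (hk : ∀ x ∈ X', x + k ∈ X) :
    IsDriftHeatSolutionOn a (fun x t => (u (x + k) t - u x t) / k)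
      (fun x t => (ux (x + k) t - ux x t) / k) (fun x t => (uxx (x + k) t - uxx x t) / k)
      (fun x t => (ut (x + k) t - ut x t) / k) X' T where
  continuousOn := by
    have hshift : ContinuousOn (fun p : ℝ × ℝ => u (p.1 + k) p.2) (X' ×ˢ T) :=
      h.continuousOn.comp (f := fun p : ℝ × ℝ => (p.1 + k, p.2)) (by fun_prop)
        fun p hp => ⟨hk p.1 hp.1, hp.2⟩
    exact (hshift.sub (h.continuousOn.mono (prod_mono hX Subset.rfl))).div_const k
  hasDerivAt_x x hx t ht := (((h.hasDerivAt_x _ (hk x hx) t ht).comp_add_const x k).sub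
    (h.hasDerivAt_x x (hX hx) t ht)).div_const k
  hasDerivAt_xx x hx t ht := (((h.hasDerivAt_xx _ (hk x hx) t ht).comp_add_const x k).sub
    (h.hasDerivAt_xx x (hX hx) t ht)).div_const k
  hasDerivAt_t x hx t ht := ((h.hasDerivAt_t _ (hk x hx) t ht).sub
    (h.hasDerivAt_t x (hX hx) t ht)).div_const k
  equation x hx t ht := by
    rw [h.equation x (hX hx) t ht, h.equation _ (hk x hx) t ht]
    ring

lemma continuousOn_symmetric_diff (h : IsDriftHeatSolutionOn a u ux uxx ut X T) {C D : Set ℝ}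
    (hadd : ∀ c ∈ C, ∀ d ∈ D, x₀ + c + d ∈ X) (hsub : ∀ c ∈ C, ∀ d ∈ D, x₀ + c - d ∈ X) :
    ContinuousOn (fun p : ℝ × ℝ × ℝ => u (x₀ + p.1 + p.2.1) p.2.2 - u (x₀ + p.1 - p.2.1) p.2.2)
      (C ×ˢ D ×ˢ T) :=
  (h.continuousOn.comp (f := fun p : ℝ × ℝ × ℝ => (x₀ + p.1 + p.2.1, p.2.2)) (by fun_prop)
    fun p hp => ⟨hadd _ hp.1 _ hp.2.1, hp.2.2⟩).sub
  (h.continuousOn.comp (f := fun p : ℝ × ℝ × ℝ => (x₀ + p.1 - p.2.1, p.2.2)) (by fun_prop)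
    fun p hp => ⟨hsub _ hp.1 _ hp.2.1, hp.2.2⟩)

/- Doubling of variables: `w(c, d, t) = u(x₀ + c + d, t) - u(x₀ + c - d, t)` vanishes for `d = 0`
and solves `w_t = w_dd + a w_c`, so it stays below a barrier whose slope at `d = 0` then bounds
`w_d(0, 0, t₀) = 2 u_x(x₀, t₀)`. -/
lemma symmetric_diff_le
    (h : IsDriftHeatSolutionOn a u ux uxx ut (Icc (x₀ - 2 * r) (x₀ + 2 * r)) (Icc (t₀ - s) t₀))
    (hr : 0 < r) (hs : 0 < s) (ha : ∀ t ∈ Icc (t₀ - s) t₀, |a t| ≤ A) (hM : 0 < M)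
    (hu : ∀ x ∈ Icc (x₀ - 2 * r) (x₀ + 2 * r), ∀ t ∈ Icc (t₀ - s) t₀, |u x t| ≤ M)
    {c d t : ℝ} (hc : c ∈ Icc (-r) r) (hd : d ∈ Icc 0 r) (ht : t ∈ Icc (t₀ - s) t₀) :
    u (x₀ + c + d) t - u (x₀ + c - d) t ≤ 2 * M * gradientBarrier r s A c d (t₀ - t) := by
  have hA : 0 ≤ A := (abs_nonneg _).trans (ha t ht)
  have hadd : ∀ c ∈ Icc (-r) r, ∀ d ∈ Icc 0 r, x₀ + c + d ∈ Icc (x₀ - 2 * r) (x₀ + 2 * r) :=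
    fun c hc d hd => ⟨by linarith [hc.1, hd.1], by linarith [hc.2, hd.2]⟩
  have hsub : ∀ c ∈ Icc (-r) r, ∀ d ∈ Icc 0 r, x₀ + c - d ∈ Icc (x₀ - 2 * r) (x₀ + 2 * r) :=
    fun c hc d hd => ⟨by linarith [hc.1, hd.2], by linarith [hc.2, hd.1]⟩
  refine sub_nonpos.1 <| nonpos_of_lt_drift_diffusion (b := fun _ _ t => a t)
    (W := fun c d t => u (x₀ + c + d) t - u (x₀ + c - d) t
      - 2 * M * gradientBarrier r s A c d (t₀ - t))
    (Wc := fun c d t => ux (x₀ + c + d) t - ux (x₀ + c - d) t - 2 * M * (2 * c / r ^ 2))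
    (Wd := fun c d t => ux (x₀ + c + d) t + ux (x₀ + c - d) t
      - 2 * M * (1 / r + (1 / s + 2 * A / r + 1) * (r - 2 * d) / 2))
    (Wdd := fun c d t => uxx (x₀ + c + d) t - uxx (x₀ + c - d) t
      + 2 * M * (1 / s + 2 * A / r + 1))
    (Wt := fun c d t => ut (x₀ + c + d) t - ut (x₀ + c - d) t + 2 * M * (1 / s))
    ?_ ?_ ?_ ?_ ?_ ?_ ?_ c hc d hd t ht
  · exact (h.continuousOn_symmetric_diff hadd hsub).sub
      (continuous_gradientBarrier.const_mul (2 * M)).continuousOn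
  · intro c hc d hd t ht hbdry
    refine sub_nonpos.2 <| sub_le_gradientBarrier_of_boundary hr hs hA (hu _ (hadd c hc d hd) t ht)
      (hu _ (hsub c hc d hd) t ht) hd (sub_nonneg.2 ht.2) (fun h => by simp [h]) ?_
    rcases hbdry with h | h | h | h | rfl <;> simp [*]
  all_goals
    intro c hc d hd t ht
    have ht := Ioc_subset_Icc_self ht
    have hp := hadd c (Ioo_subset_Icc_self hc) d (Ioo_subset_Icc_self hd)
    have hm := hsub c (Ioo_subset_Icc_self hc) d (Ioo_subset_Icc_self hd)
  · exact ((((h.hasDerivAt_x _ hp t ht).comp_add_const (x₀ + c) d).comp_const_add x₀ c).sub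
      (((h.hasDerivAt_x _ hm t ht).comp_sub_const (x₀ + c) d).comp_const_add x₀ c)).sub
      ((hasDerivAt_gradientBarrier_fst c d (t₀ - t)).const_mul (2 * M))
  · exact ((((h.hasDerivAt_x _ hp t ht).comp_const_add (x₀ + c) d).sub
      ((h.hasDerivAt_x _ hm t ht).comp_const_sub (x₀ + c) d)).sub
      ((hasDerivAt_gradientBarrier_snd c d (t₀ - t)).const_mul (2 * M))).congr_deriv (by ring)
  · exact ((((h.hasDerivAt_xx _ hp t ht).comp_const_add (x₀ + c) d).add
      ((h.hasDerivAt_xx _ hm t ht).comp_const_sub (x₀ + c) d)).sub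
      ((hasDerivAt_gradientBarrier_snd_snd d).const_mul (2 * M))).congr_deriv (by ring)
  · exact (((h.hasDerivAt_t _ hp t ht).sub (h.hasDerivAt_t _ hm t ht)).sub
      (((hasDerivAt_gradientBarrier_thd c d (t₀ - t)).comp_const_sub t₀ t).const_mul
      (2 * M))).congr_deriv (by ring)
  · rw [h.equation _ hp t ht, h.equation _ hm t ht]
    have := mul_le_mul_of_nonneg_left
      (drift_mul_deriv_gradientBarrier_le hr (ha t ht) (abs_le.2 ⟨hc.1.le, hc.2.le⟩))
      (by positivity : 0 ≤ 2 * M)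
    linarith

lemma ux_le
    (h : IsDriftHeatSolutionOn a u ux uxx ut (Icc (x₀ - 2 * r) (x₀ + 2 * r)) (Icc (t₀ - s) t₀))
    (hr : 0 < r) (hs : 0 < s) (ha : ∀ t ∈ Icc (t₀ - s) t₀, |a t| ≤ A) (hM : 0 < M)
    (hu : ∀ x ∈ Icc (x₀ - 2 * r) (x₀ + 2 * r), ∀ t ∈ Icc (t₀ - s) t₀, |u x t| ≤ M) :
    ux x₀ t₀ ≤ M * gradientBound r s A := by
  have hx₀ : x₀ ∈ Icc (x₀ - 2 * r) (x₀ + 2 * r) := ⟨by linarith, by linarith⟩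
  have ht₀ : t₀ ∈ Icc (t₀ - s) t₀ := ⟨by linarith, le_rfl⟩
  have hdiff : HasDerivAt
      (fun d => u (x₀ + d) t₀ - u (x₀ - d) t₀ - 2 * M * gradientBarrier r s A 0 d 0)
      (2 * ux x₀ t₀ - 2 * M * gradientBound r s A) 0 := by
    have hux := h.hasDerivAt_x x₀ hx₀ t₀ ht₀
    refine ((HasDerivAt.comp_const_add x₀ 0 (by simpa using hux)).sub
      (HasDerivAt.comp_const_sub x₀ 0 (by simpa using hux))).sub
      ((hasDerivAt_gradientBarrier_snd 0 0 0).const_mul (2 * M)) |>.congr_deriv ?_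
    unfold gradientBound
    ring
  have hbarrier : gradientBarrier r s A 0 0 0 = 0 := by simp [gradientBarrier]
  have := hasDerivAt_nonpos_of_eventually_le_right hdiff <| by
    filter_upwards [Ioo_mem_nhdsGT hr] with d hd
    have := h.symmetric_diff_le hr hs ha hM hu (c := 0) ⟨by linarith, hr.le⟩
      (Ioo_subset_Icc_self hd) ht₀
    simp only [add_zero, sub_self, sub_zero, hbarrier, mul_zero] at this ⊢
    linarith
  linarith

lemma abs_ux_le
    (h : IsDriftHeatSolutionOn a u ux uxx ut (Icc (x₀ - 2 * r) (x₀ + 2 * r)) (Icc (t₀ - s) t₀))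
    (hr : 0 < r) (hs : 0 < s) (ha : ∀ t ∈ Icc (t₀ - s) t₀, |a t| ≤ A) (hM : 0 < M)
    (hu : ∀ x ∈ Icc (x₀ - 2 * r) (x₀ + 2 * r), ∀ t ∈ Icc (t₀ - s) t₀, |u x t| ≤ M) :
    |ux x₀ t₀| ≤ M * gradientBound r s A :=
  abs_le'.2 ⟨h.ux_le hr hs ha hM hu,
    h.neg.ux_le hr hs ha hM fun x hx t ht => by simpa using hu x hx t ht⟩

lemma abs_uxx_le
    (h : IsDriftHeatSolutionOn a u ux uxx ut (Icc (x₀ - 5 * r) (x₀ + 5 * r))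
      (Icc (t₀ - 2 * s) t₀))
    (hr : 0 < r) (hs : 0 < s) (ha : ∀ t ∈ Icc (t₀ - 2 * s) t₀, |a t| ≤ A) (hM : 0 < M)
    (hu : ∀ x ∈ Icc (x₀ - 5 * r) (x₀ + 5 * r), ∀ t ∈ Icc (t₀ - 2 * s) t₀, |u x t| ≤ M) :
    |uxx x₀ t₀| ≤ M * gradientBound r s A * gradientBound r s A := by
  have ht₀ : t₀ ∈ Icc (t₀ - 2 * s) t₀ := ⟨by linarith, le_rfl⟩
  have hx₀ : x₀ ∈ Icc (x₀ - 5 * r) (x₀ + 5 * r) := ⟨by linarith, by linarith⟩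
  have hA : 0 ≤ A := (abs_nonneg _).trans (ha t₀ ht₀)
  have hsubT : ∀ t ∈ Icc (t₀ - s) t₀, Icc (t - s) t ⊆ Icc (t₀ - 2 * s) t₀ := fun t ht =>
    Icc_subset_Icc (by linarith [ht.1]) ht.2
  have hgrad : ∀ x ∈ Icc (x₀ - 3 * r) (x₀ + 3 * r), ∀ t ∈ Icc (t₀ - s) t₀,
      |ux x t| ≤ M * gradientBound r s A := fun x hx t ht => by
    have hsubX : Icc (x - 2 * r) (x + 2 * r) ⊆ Icc (x₀ - 5 * r) (x₀ + 5 * r) :=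
      Icc_subset_Icc (by linarith [hx.1]) (by linarith [hx.2])
    exact (h.mono hsubX (hsubT t ht)).abs_ux_le hr hs (fun t' ht' => ha t' (hsubT t ht ht')) hM
      fun x' hx' t' ht' => hu x' (hsubX hx') t' (hsubT t ht ht')
  have hquot : ∀ᶠ k in 𝓝[>] (0 : ℝ),
      |(ux (x₀ + k) t₀ - ux x₀ t₀) / k| ≤ M * gradientBound r s A * gradientBound r s A := by
    filter_upwards [Ioo_mem_nhdsGT hr] with k hk
    have hT : Icc (t₀ - s) t₀ ⊆ Icc (t₀ - 2 * s) t₀ := Icc_subset_Icc (by linarith) le_rfl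
    refine ((h.diffQuot k (X' := Icc (x₀ - 2 * r) (x₀ + 2 * r))
      (Icc_subset_Icc (by linarith) (by linarith)) fun x hx => ⟨by linarith [hx.1, hk.1],
        by linarith [hx.2, hk.2]⟩).mono Subset.rfl hT).abs_ux_le hr hs (fun t ht => ha t (hT ht))
      (mul_pos hM (gradientBound_pos hr hs hA)) fun x hx t ht => ?_
    have hxk : Icc x (x + k) ⊆ Icc (x₀ - 3 * r) (x₀ + 3 * r) :=
      Icc_subset_Icc (by linarith [hx.1]) (by linarith [hx.2, hk.2])
    have hmvt := (convex_Icc x (x + k)).norm_image_sub_le_of_norm_hasDerivWithin_le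
      (fun y hy => (h.hasDerivAt_x y (Icc_subset_Icc (by linarith) (by linarith) (hxk hy)) t
        (hT ht)).hasDerivWithinAt) (fun y hy => hgrad y (hxk hy) t ht)
      (left_mem_Icc.2 (by linarith [hk.1])) (right_mem_Icc.2 (by linarith [hk.1]))
    rw [abs_div, div_le_iff₀ (abs_pos.2 hk.1.ne')]
    simpa using hmvt
  refine le_of_tendsto (((hasDerivAt_iff_tendsto_slope_zero.1
    (h.hasDerivAt_xx x₀ hx₀ t₀ ht₀)).mono_left (nhdsGT_le_nhdsNE 0)).abs) ?_
  simpa only [smul_eq_mul, div_eq_inv_mul] using hquot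

lemma exists_abs_space_deriv_le (h : IsDriftHeatSolutionOn a u ux uxx ut X T) (hX : IsOpen X)
    (hT : IsOpen T) (ha : ContinuousOn a T) (hK : IsCompact K) (hKX : K ⊆ X) (hL : IsCompact L)
    (hLT : L ⊆ T) : ∃ C, ∀ x ∈ K, ∀ t ∈ L, |ux x t| ≤ C ∧ |uxx x t| ≤ C := by
  obtain ⟨ρ, hρ, hρX⟩ := hK.exists_cthickening_subset_open hX hKX
  obtain ⟨σ, hσ, hσT⟩ := hL.exists_cthickening_subset_open hT hLT
  obtain ⟨M, hM⟩ := (hK.cthickening.prod hL.cthickening).exists_bound_of_continuousOn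
    (h.continuousOn.mono (prod_mono hρX hσT))
  obtain ⟨A, hA⟩ := hL.cthickening.exists_bound_of_continuousOn (ha.mono hσT)
  set G := gradientBound (ρ / 5) (σ / 2) A
  have hM' : 0 < |M| + 1 := by positivity
  suffices ∀ x ∈ K, ∀ t ∈ L, |ux x t| ≤ (|M| + 1) * G ∧ |uxx x t| ≤ (|M| + 1) * G * G from
    ⟨max ((|M| + 1) * G) ((|M| + 1) * G * G), fun x hx t ht =>
      (this x hx t ht).imp (le_max_of_le_left ·) (le_max_of_le_right ·)⟩
  intro x hx t ht
  have hxρ : Icc (x - 5 * (ρ / 5)) (x + 5 * (ρ / 5)) ⊆ Metric.cthickening ρ K := by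
    rw [mul_div_cancel₀ ρ (by norm_num), ← Real.closedBall_eq_Icc]
    exact Metric.closedBall_subset_cthickening hx ρ
  have htσ : Icc (t - 2 * (σ / 2)) t ⊆ Metric.cthickening σ L := by
    rw [mul_div_cancel₀ σ (by norm_num)]
    refine Subset.trans ?_ (Metric.closedBall_subset_cthickening ht σ)
    rw [Real.closedBall_eq_Icc]
    exact Icc_subset_Icc le_rfl (by linarith)
  have hu : ∀ y ∈ Icc (x - 5 * (ρ / 5)) (x + 5 * (ρ / 5)), ∀ τ ∈ Icc (t - 2 * (σ / 2)) t,
      |u y τ| ≤ |M| + 1 := fun y hy τ hτ =>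
    (hM (y, τ) ⟨hxρ hy, htσ hτ⟩).trans (by linarith [le_abs_self M])
  have hsol := h.mono (hxρ.trans hρX) (htσ.trans hσT)
  have hx' : Icc (x - 2 * (ρ / 5)) (x + 2 * (ρ / 5)) ⊆ Icc (x - 5 * (ρ / 5)) (x + 5 * (ρ / 5)) :=
    Icc_subset_Icc (by linarith) (by linarith)
  have ht' : Icc (t - σ / 2) t ⊆ Icc (t - 2 * (σ / 2)) t := Icc_subset_Icc (by linarith) le_rfl
  exact ⟨(hsol.mono hx' ht').abs_ux_le (by positivity) (by positivity)
    (fun τ hτ => hA τ (htσ (ht' hτ))) hM' fun y hy τ hτ => hu y (hx' hy) τ (ht' hτ),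
    hsol.abs_uxx_le (by positivity) (by positivity) (fun τ hτ => hA τ (htσ hτ)) hM' hu⟩

lemma exists_abs_deriv_le (h : IsDriftHeatSolutionOn a u ux uxx ut X T) (hX : IsOpen X)
    (hT : IsOpen T) (ha : ContinuousOn a T) (hK : IsCompact K) (hKX : K ⊆ X) (hL : IsCompact L)
    (hLT : L ⊆ T) : ∃ C, ∀ x ∈ K, ∀ t ∈ L, |ux x t| ≤ C ∧ |uxx x t| ≤ C ∧ |ut x t| ≤ C := by
  obtain ⟨C, hC⟩ := h.exists_abs_space_deriv_le hX hT ha hK hKX hL hLT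
  obtain ⟨A, hA⟩ := hL.exists_bound_of_continuousOn (ha.mono hLT)
  refine ⟨C + A * C, fun x hx t ht => ?_⟩
  obtain ⟨h₁, h₂⟩ := hC x hx t ht
  have h₃ : |a t * ux x t| ≤ A * C := by
    rw [abs_mul]
    exact mul_le_mul (hA t ht) h₁ (abs_nonneg _) ((norm_nonneg _).trans (hA t ht))
  have := (abs_nonneg _).trans h₃
  rw [h.equation x (hKX hx) t (hLT ht)]
  exact ⟨by linarith, by linarith, (abs_add_le _ _).trans (by linarith)⟩

end IsDriftHeatSolutionOn

end InteriorEstimates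

section TestFunctions

/-- A twice continuously differentiable function together with its first two derivatives. -/
structure HasTwoDerivs (φ φ₁ φ₂ : ℝ → ℝ) : Prop where
  hasDerivAt : ∀ x, HasDerivAt φ (φ₁ x) x
  hasDerivAt' : ∀ x, HasDerivAt φ₁ (φ₂ x) x
  continuous_snd : Continuous φ₂

namespace HasTwoDerivs

variable {φ φ₁ φ₂ ψ ψ₁ ψ₂ : ℝ → ℝ}

lemma continuous (h : HasTwoDerivs φ φ₁ φ₂) : Continuous φ :=
  continuous_iff_continuousAt.2 fun x => (h.hasDerivAt x).continuousAt

lemma continuous_fst (h : HasTwoDerivs φ φ₁ φ₂) : Continuous φ₁ :=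
  continuous_iff_continuousAt.2 fun x => (h.hasDerivAt' x).continuousAt

lemma derivs_eq_zero_of_eventually_eq (h : HasTwoDerivs φ φ₁ φ₂) {x c : ℝ}
    (hx : ∀ᶠ y in 𝓝 x, φ y = c) : φ₁ x = 0 ∧ φ₂ x = 0 := by
  have hfst : ∀ᶠ y in 𝓝 x, φ₁ y = 0 := by
    filter_upwards [hx.eventually_nhds] with y hy
    have hconst : φ =ᶠ[𝓝 y] fun _ => c := hy
    rw [← (h.hasDerivAt y).deriv, hconst.deriv_eq, deriv_const]
  have hconst : φ₁ =ᶠ[𝓝 x] fun _ => 0 := hfst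
  exact ⟨hfst.self_of_nhds, by rw [← (h.hasDerivAt' x).deriv, hconst.deriv_eq, deriv_const]⟩

lemma sub (hφ : HasTwoDerivs φ φ₁ φ₂) (hψ : HasTwoDerivs ψ ψ₁ ψ₂) :
    HasTwoDerivs (fun x => φ x - ψ x) (fun x => φ₁ x - ψ₁ x) (fun x => φ₂ x - ψ₂ x) where
  hasDerivAt x := (hφ.hasDerivAt x).sub (hψ.hasDerivAt x)
  hasDerivAt' x := (hφ.hasDerivAt' x).sub (hψ.hasDerivAt' x)
  continuous_snd := hφ.continuous_snd.sub hψ.continuous_snd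

lemma mul (hφ : HasTwoDerivs φ φ₁ φ₂) (hψ : HasTwoDerivs ψ ψ₁ ψ₂) :
    HasTwoDerivs (fun x => φ x * ψ x) (fun x => φ₁ x * ψ x + φ x * ψ₁ x)
      (fun x => φ₂ x * ψ x + 2 * (φ₁ x * ψ₁ x) + φ x * ψ₂ x) where
  hasDerivAt x := (hφ.hasDerivAt x).mul (hψ.hasDerivAt x)
  hasDerivAt' x := (((hφ.hasDerivAt' x).mul (hψ.hasDerivAt x)).add
    ((hφ.hasDerivAt x).mul (hψ.hasDerivAt' x))).congr_deriv (by ring)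
  continuous_snd := ((hφ.continuous_snd.mul hψ.continuous).add
    ((hφ.continuous_fst.mul hψ.continuous_fst).const_mul 2)).add
    (hφ.continuous.mul hψ.continuous_snd)

lemma comp_mul_add (hφ : HasTwoDerivs φ φ₁ φ₂) (c d : ℝ) :
    HasTwoDerivs (fun x => φ (c * x + d)) (fun x => c * φ₁ (c * x + d))
      (fun x => c ^ 2 * φ₂ (c * x + d)) where
  hasDerivAt x := by
    have haff : HasDerivAt (fun x => c * x + d) c x := by
      simpa using ((hasDerivAt_id x).const_mul c).add_const d
    exact ((hφ.hasDerivAt _).comp x haff).congr_deriv (mul_comm _ _)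
  hasDerivAt' x := by
    have haff : HasDerivAt (fun x => c * x + d) c x := by
      simpa using ((hasDerivAt_id x).const_mul c).add_const d
    exact (((hφ.hasDerivAt' _).comp x haff).const_mul c).congr_deriv (by ring)
  continuous_snd := (hφ.continuous_snd.comp (by fun_prop)).const_mul _

lemma abs_sub_le (hφ : HasTwoDerivs φ φ₁ φ₂) {C : ℝ} (hC : ∀ x, |φ₁ x| ≤ C) (x y : ℝ) :
    |φ y - φ x| ≤ C * |y - x| :=
  convex_univ.norm_image_sub_le_of_norm_hasDerivWithin_le
    (fun z _ => (hφ.hasDerivAt z).hasDerivWithinAt) (fun z _ => hC z) (mem_univ x) (mem_univ y)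

end HasTwoDerivs

lemma hasTwoDerivs_smoothTransition : HasTwoDerivs Real.smoothTransition
    (deriv Real.smoothTransition) (deriv (deriv Real.smoothTransition)) := by
  have h₂ : ContDiff ℝ 2 Real.smoothTransition := Real.smoothTransition.contDiff
  have h₁ : ContDiff ℝ 1 (deriv Real.smoothTransition) := h₂.deriv'
  exact ⟨fun x => (h₂.differentiable (by norm_num) x).hasDerivAt,
    fun x => (h₁.differentiable (by norm_num) x).hasDerivAt, h₁.continuous_deriv le_rfl⟩

lemma exists_abs_deriv_smoothTransition_le : ∃ E, ∀ x, |deriv Real.smoothTransition x| ≤ E ∧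
    |deriv (deriv Real.smoothTransition) x| ≤ E := by
  have h := hasTwoDerivs_smoothTransition
  obtain ⟨E₁, hE₁⟩ := (isCompact_Icc (a := (0 : ℝ)) (b := 1)).exists_bound_of_continuousOn
    h.continuous_fst.continuousOn
  obtain ⟨E₂, hE₂⟩ := (isCompact_Icc (a := (0 : ℝ)) (b := 1)).exists_bound_of_continuousOn
    h.continuous_snd.continuousOn
  have hE : 0 ≤ E₁ := (norm_nonneg _).trans (hE₁ 0 (by simp))
  refine ⟨max E₁ E₂, fun x => ?_⟩
  suffices x ∈ Icc 0 1 ∨ deriv Real.smoothTransition x = 0 ∧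
      deriv (deriv Real.smoothTransition) x = 0 by
    rcases this with hx | ⟨h₁, h₂⟩
    · exact ⟨(hE₁ x hx).trans (le_max_left _ _), (hE₂ x hx).trans (le_max_right _ _)⟩
    · simp [h₁, h₂, hE]
  rcases lt_or_ge x 0 with hx | hx
  · exact .inr (h.derivs_eq_zero_of_eventually_eq (mem_of_superset (Iio_mem_nhds hx) fun y hy =>
      Real.smoothTransition.zero_of_nonpos (mem_Iio.1 hy).le))
  rcases le_or_gt x 1 with hx' | hx'
  · exact .inl ⟨hx, hx'⟩
  · exact .inr (h.derivs_eq_zero_of_eventually_eq (mem_of_superset (Ioi_mem_nhds hx') fun y hy =>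
      Real.smoothTransition.one_of_one_le (mem_Ioi.1 hy).le))

/-- A smooth cutoff that equals `1` on `(-∞, L]` and `0` on `[2L, ∞)`, for `L > 0`. -/
noncomputable def cutoff (L v : ℝ) : ℝ := Real.smoothTransition (2 - v / L)

section Cutoff

variable {L v : ℝ}

lemma cutoff_nonneg : 0 ≤ cutoff L v := Real.smoothTransition.nonneg _

lemma cutoff_le_one : cutoff L v ≤ 1 := Real.smoothTransition.le_one _

lemma cutoff_eq_one (hL : 0 < L) (hv : v ≤ L) : cutoff L v = 1 :=
  Real.smoothTransition.one_of_one_le (by linarith [(div_le_one hL).2 hv])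

lemma cutoff_eq_zero (hL : 0 < L) (hv : 2 * L ≤ v) : cutoff L v = 0 :=
  Real.smoothTransition.zero_of_nonpos (by linarith [(le_div_iff₀ hL).2 hv])

lemma abs_cutoff_sub_one_le (hL : 0 < L) (hv : 0 ≤ v) : |cutoff L v - 1| ≤ v / L := by
  rcases le_or_gt v L with h | h
  · rw [cutoff_eq_one hL h, sub_self, abs_zero]
    positivity
  · refine (abs_le.2 ⟨?_, ?_⟩).trans ((one_le_div hL).2 h.le)
    · linarith [cutoff_nonneg (L := L) (v := v)]
    · linarith [cutoff_le_one (L := L) (v := v)]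

lemma hasTwoDerivs_cutoff (L : ℝ) : HasTwoDerivs (cutoff L)
    (fun v => -L⁻¹ * deriv Real.smoothTransition (-L⁻¹ * v + 2))
    (fun v => (-L⁻¹) ^ 2 * deriv (deriv Real.smoothTransition) (-L⁻¹ * v + 2)) := by
  convert hasTwoDerivs_smoothTransition.comp_mul_add (-L⁻¹) 2 using 1
  ext v
  rw [cutoff, div_eq_inv_mul, sub_eq_neg_add, neg_mul]

lemma exists_hasTwoDerivs_cutoff : ∃ E, ∀ L, 1 ≤ L → ∃ η₁ η₂, HasTwoDerivs (cutoff L) η₁ η₂ ∧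
    ∀ v, |η₁ v| ≤ E / L ∧ |η₂ v| ≤ E / L := by
  obtain ⟨E, hE⟩ := exists_abs_deriv_smoothTransition_le
  refine ⟨E, fun L hL => ⟨_, _, hasTwoDerivs_cutoff L, fun v => ?_⟩⟩
  have hL₀ : 0 < L := by linarith
  have : 0 ≤ E := (abs_nonneg _).trans (hE 0).1
  obtain ⟨h₁, h₂⟩ := hE (-L⁻¹ * v + 2)
  constructor
  · rw [abs_mul, abs_neg, abs_of_pos (inv_pos.2 hL₀), div_eq_inv_mul]
    gcongr
  · rw [abs_mul, neg_sq, abs_of_pos (by positivity), div_eq_inv_mul]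
    have : L⁻¹ ^ 2 ≤ L⁻¹ :=
      pow_le_of_le_one (by positivity) (inv_le_one_of_one_le₀ hL) two_ne_zero
    gcongr

end Cutoff

lemma HasTwoDerivs.exists_truncation {φ φ₁ φ₂ : ℝ → ℝ} (h : HasTwoDerivs φ φ₁ φ₂) {C : ℝ}
    (h₀ : φ 0 = 0) (hC : ∀ v, |φ₁ v| ≤ C ∧ |φ₂ v| ≤ C) :
    ∃ K, 0 ≤ K ∧ ∀ L, 1 ≤ L → ∃ ψ₁ ψ₂, HasTwoDerivs (fun v => φ v * cutoff L v) ψ₁ ψ₂ ∧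
      ∀ v, 0 < v → |ψ₁ v - φ₁ v| ≤ K / L * (1 + v) ∧ |ψ₂ v - φ₂ v| ≤ K / L * (1 + v) := by
  obtain ⟨E, hE⟩ := exists_hasTwoDerivs_cutoff
  have hC₀ : 0 ≤ C := (abs_nonneg _).trans (hC 0).1
  have hE₀ : 0 ≤ E := by
    obtain ⟨η₁, η₂, -, hbd⟩ := hE 1 le_rfl
    simpa using (abs_nonneg _).trans (hbd 0).1
  refine ⟨C + 2 * C * E, by positivity, fun L hL => ?_⟩
  obtain ⟨η₁, η₂, hη, hbd⟩ := hE L hL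
  have hL₀ : 0 < L := by linarith
  refine ⟨_, _, h.mul hη, fun v hv => ?_⟩
  obtain ⟨hη₁, hη₂⟩ := hbd v
  obtain ⟨hφ₁, hφ₂⟩ := hC v
  have hφ : |φ v| ≤ C * v := by
    simpa [h₀, abs_of_pos hv] using h.abs_sub_le (fun x => (hC x).1) 0 v
  have hη₀ := abs_cutoff_sub_one_le hL₀ hv.le
  constructor
  · calc |φ₁ v * cutoff L v + φ v * η₁ v - φ₁ v|
        = |φ₁ v * (cutoff L v - 1) + φ v * η₁ v| := by ring_nf
      _ ≤ C * (v / L) + C * v * (E / L) := by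
        refine (abs_add_le _ _).trans ?_
        rw [abs_mul, abs_mul]
        gcongr
      _ ≤ C * (1 + v) / L + 2 * C * (E / L) * (1 + v) := by
        have : 0 ≤ C / L + C * (E / L) * (2 + v) := by positivity
        linear_combination this
      _ = (C + 2 * C * E) / L * (1 + v) := by ring
  · calc |φ₂ v * cutoff L v + 2 * (φ₁ v * η₁ v) + φ v * η₂ v - φ₂ v|
        = |φ₂ v * (cutoff L v - 1) + 2 * (φ₁ v * η₁ v) + φ v * η₂ v| := by ring_nf
      _ ≤ C * (v / L) + 2 * (C * (E / L)) + C * v * (E / L) := by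
        refine (abs_add_three _ _ _).trans ?_
        simp only [abs_mul, Nat.abs_ofNat]
        gcongr
      _ ≤ C * (1 + v) / L + 2 * C * (E / L) * (1 + v) := by
        have : 0 ≤ C / L + C * (E / L) * v := by positivity
        linear_combination this
      _ = (C + 2 * C * E) / L * (1 + v) := by ring

end TestFunctions

section Renormalization

namespace IsDriftHeatSolutionOn

variable {a : ℝ → ℝ} {u ux uxx ut : ℝ → ℝ → ℝ} {X T Y : Set ℝ} {α β δ R t : ℝ}
  {φ φ₁ φ₂ Φ Φ₁ Φ₂ : ℝ → ℝ}

lemma continuousOn_fst (h : IsDriftHeatSolutionOn a u ux uxx ut X T) (ht : t ∈ T) :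
    ContinuousOn (fun x => u x t) X :=
  fun x hx => (h.hasDerivAt_x x hx t ht).continuousAt.continuousWithinAt

lemma continuousOn_ux (h : IsDriftHeatSolutionOn a u ux uxx ut X T) (ht : t ∈ T) :
    ContinuousOn (fun x => ux x t) X :=
  fun x hx => (h.hasDerivAt_xx x hx t ht).continuousAt.continuousWithinAt

lemma intervalIntegrable_ut (h : IsDriftHeatSolutionOn a u ux uxx ut X T) (hX : IsOpen X)
    (hT : IsOpen T) (ha : ContinuousOn a T) (hαβ : α ≤ β) (hαβX : Icc α β ⊆ X) (ht : t ∈ T) :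
    IntervalIntegrable (fun x => ut x t) volume α β := by
  obtain ⟨C, hC⟩ := h.exists_abs_deriv_le hX hT ha isCompact_Icc hαβX isCompact_singleton
    (singleton_subset_iff.2 ht)
  have hux := (h.continuousOn_ux ht).mono hαβX
  rw [intervalIntegrable_iff_integrableOn_Icc_of_le hαβ]
  refine .of_bound measure_Icc_lt_top ?_ C
    ((ae_restrict_iff' measurableSet_Icc).2 (.of_forall fun x hx => (hC x hx t rfl).2.2))
  refine (((measurable_deriv fun x => ux x t).aestronglyMeasurable).add
    ((hux.const_smul (a t)).aestronglyMeasurable measurableSet_Icc)).congr ?_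
  filter_upwards [ae_restrict_mem measurableSet_Icc] with x hx
  simp [(h.hasDerivAt_xx x (hαβX hx) t ht).deriv, h.equation x (hαβX hx) t ht]

lemma hasDerivAt_integral_mul_comp (h : IsDriftHeatSolutionOn a u ux uxx ut X T) (hX : IsOpen X)
    (hT : IsOpen T) (ha : ContinuousOn a T) (hαβ : α ≤ β) (hαβX : Icc α β ⊆ X)
    (hφ : Continuous φ) (huY : ∀ x ∈ X, ∀ t ∈ T, u x t ∈ Y)
    (hΦ : ∀ y ∈ Y, HasDerivAt Φ (Φ₁ y) y) (hΦ₁ : ContinuousOn Φ₁ Y) (ht : t ∈ T) :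
    HasDerivAt (fun s => ∫ x in α..β, φ x * Φ (u x s))
      (∫ x in α..β, φ x * Φ₁ (u x t) * ut x t) t := by
  obtain ⟨ε, hε, hεT⟩ := Metric.nhds_basis_closedBall.mem_iff.1 (hT.mem_nhds ht)
  obtain ⟨C, hC⟩ := h.exists_abs_deriv_le hX hT ha isCompact_Icc hαβX (isCompact_closedBall t ε) hεT
  have hcont : ContinuousOn (fun p : ℝ × ℝ => φ p.1 * Φ₁ (u p.1 p.2)) (X ×ˢ T) :=
    (by fun_prop : ContinuousOn (fun p : ℝ × ℝ => φ p.1) (X ×ˢ T)).mul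
      (hΦ₁.comp h.continuousOn fun p hp => huY p.1 hp.1 p.2 hp.2)
  obtain ⟨B, hB⟩ := (isCompact_Icc.prod (isCompact_closedBall t ε)).exists_bound_of_continuousOn
    (hcont.mono (prod_mono hαβX hεT))
  have hu : ∀ s ∈ T, ContinuousOn (fun x => φ x * Φ (u x s)) (Icc α β) := fun s hs =>
    hφ.continuousOn.mul (ContinuousOn.comp (t := Y)
      (fun y hy => (hΦ y hy).continuousAt.continuousWithinAt)
      ((h.continuousOn_fst hs).mono hαβX) fun x hx => huY x (hαβX hx) s hs)
  have hut := h.intervalIntegrable_ut hX hT ha hαβ hαβX ht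
  have hmem : ∀ x ∈ uIoc α β, x ∈ Icc α β := fun x hx =>
    Ioc_subset_Icc_self (by rwa [uIoc_of_le hαβ] at hx)
  refine (intervalIntegral.hasDerivAt_integral_of_dominated_loc_of_deriv_le
    (F' := fun s x => φ x * Φ₁ (u x s) * ut x s) (bound := fun _ => B * C)
    (Metric.closedBall_mem_nhds t hε) ?_ ?_ ?_ ?_ ?_ ?_).2
  · filter_upwards [hT.mem_nhds ht] with s hs
    exact ((hu s hs).intervalIntegrable_of_Icc hαβ).aestronglyMeasurable_restrict_uIoc
  · exact (hu t ht).intervalIntegrable_of_Icc hαβ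
  · refine (ContinuousOn.intervalIntegrable_of_Icc hαβ ?_).aestronglyMeasurable_restrict_uIoc.mul
      hut.aestronglyMeasurable_restrict_uIoc
    exact hcont.comp (f := fun x => (x, t)) (by fun_prop) fun x hx => ⟨hαβX hx, ht⟩
  · refine .of_forall fun x hx s hs => ?_
    rw [norm_mul]
    exact mul_le_mul (hB (x, s) ⟨hmem x hx, hs⟩) (hC x (hmem x hx) s hs).2.2 (norm_nonneg _)
      ((norm_nonneg _).trans (hB (x, s) ⟨hmem x hx, hs⟩))
  · exact intervalIntegrable_const
  · refine .of_forall fun x hx s hs => ?_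
    have hx' := hαβX (hmem x hx)
    exact (((hΦ _ (huY x hx' s (hεT hs))).comp s (h.hasDerivAt_t x hx' s (hεT hs))).const_mul
      (φ x)).congr_deriv (mul_assoc _ _ _).symm

lemma integral_mul_comp_mul_ut (h : IsDriftHeatSolutionOn a u ux uxx ut X T) (hX : IsOpen X)
    (hT : IsOpen T) (ha : ContinuousOn a T) (hαβ : α ≤ β) (hαβX : Icc α β ⊆ X)
    (hφ : HasTwoDerivs φ φ₁ φ₂) (hα : φ α = 0) (hα₁ : φ₁ α = 0) (hβ : φ β = 0) (hβ₁ : φ₁ β = 0)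
    (huY : ∀ x ∈ X, ∀ t ∈ T, u x t ∈ Y) (hΦ : ∀ y ∈ Y, HasDerivAt Φ (Φ₁ y) y)
    (hΦ₁ : ∀ y ∈ Y, HasDerivAt Φ₁ (Φ₂ y) y) (hΦ₂ : ContinuousOn Φ₂ Y) (ht : t ∈ T) :
    ∫ x in α..β, φ x * Φ₁ (u x t) * ut x t =
      (∫ x in α..β, (φ₂ x - a t * φ₁ x) * Φ (u x t)) -
        ∫ x in α..β, φ x * Φ₂ (u x t) * ux x t ^ 2 := by
  have hu := (h.continuousOn_fst ht).mono hαβX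
  have hux := (h.continuousOn_ux ht).mono hαβX
  have huY' : MapsTo (fun x => u x t) (Icc α β) Y := fun x hx => huY x (hαβX hx) t ht
  have hcΦ : ContinuousOn (fun x => Φ (u x t)) (Icc α β) := ContinuousOn.comp
    (fun y hy => (hΦ y hy).continuousAt.continuousWithinAt) hu huY'
  have hcΦ₁ : ContinuousOn (fun x => Φ₁ (u x t)) (Icc α β) := ContinuousOn.comp
    (fun y hy => (hΦ₁ y hy).continuousAt.continuousWithinAt) hu huY'
  have hi₁ : IntervalIntegrable (fun x => φ x * Φ₁ (u x t) * ut x t) volume α β :=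
    (h.intervalIntegrable_ut hX hT ha hαβ hαβX ht).continuousOn_mul
      (by rw [uIcc_of_le hαβ]; exact hφ.continuous.continuousOn.mul hcΦ₁)
  have hi₂ : IntervalIntegrable (fun x => φ x * Φ₂ (u x t) * ux x t ^ 2) volume α β :=
    ((hφ.continuous.continuousOn.mul (hΦ₂.comp hu huY')).mul (hux.pow 2)).intervalIntegrable_of_Icc
      hαβ
  have hi₃ : IntervalIntegrable (fun x => (φ₂ x - a t * φ₁ x) * Φ (u x t)) volume α β :=
    ((hφ.continuous_snd.sub (hφ.continuous_fst.const_mul (a t))).continuousOn.mul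
      hcΦ).intervalIntegrable_of_Icc hαβ
  have hE : ∀ x ∈ uIcc α β, HasDerivAt
      (fun x => φ x * Φ₁ (u x t) * ux x t - (φ₁ x - a t * φ x) * Φ (u x t))
      (φ x * Φ₁ (u x t) * ut x t + φ x * Φ₂ (u x t) * ux x t ^ 2
        - (φ₂ x - a t * φ₁ x) * Φ (u x t)) x := by
    intro x hx
    rw [uIcc_of_le hαβ] at hx
    have hx' := hαβX hx
    have hu := h.hasDerivAt_x x hx' t ht
    refine ((((hφ.hasDerivAt x).mul ((hΦ₁ _ (huY' hx)).comp x hu)).mul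
      (h.hasDerivAt_xx x hx' t ht)).sub (((hφ.hasDerivAt' x).sub
      ((hφ.hasDerivAt x).const_mul (a t))).mul ((hΦ _ (huY' hx)).comp x hu))).congr_deriv ?_
    simp only [Function.comp_apply, Pi.mul_apply, Pi.sub_apply, h.equation x hx' t ht]
    ring
  have hFTC := intervalIntegral.integral_eq_sub_of_hasDerivAt hE ((hi₁.add hi₂).sub hi₃)
  rw [intervalIntegral.integral_sub (hi₁.add hi₂) hi₃,
    intervalIntegral.integral_add hi₁ hi₂] at hFTC
  simp only [hα, hα₁, hβ, hβ₁, zero_mul, mul_zero, sub_zero] at hFTC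
  linarith

lemma hasDerivAt_integral_renormalized (h : IsDriftHeatSolutionOn a u ux uxx ut X T)
    (hX : IsOpen X) (hT : IsOpen T) (ha : ContinuousOn a T) (hαβ : α ≤ β) (hαβX : Icc α β ⊆ X)
    (hφ : HasTwoDerivs φ φ₁ φ₂) (hα : φ α = 0) (hα₁ : φ₁ α = 0) (hβ : φ β = 0) (hβ₁ : φ₁ β = 0)
    (huY : ∀ x ∈ X, ∀ t ∈ T, u x t ∈ Y) (hΦ : ∀ y ∈ Y, HasDerivAt Φ (Φ₁ y) y)
    (hΦ₁ : ∀ y ∈ Y, HasDerivAt Φ₁ (Φ₂ y) y) (hΦ₂ : ContinuousOn Φ₂ Y) (ht : t ∈ T) :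
    HasDerivAt (fun s => ∫ x in α..β, φ x * Φ (u x s))
      ((∫ x in α..β, (φ₂ x - a t * φ₁ x) * Φ (u x t)) -
        ∫ x in α..β, φ x * Φ₂ (u x t) * ux x t ^ 2) t := by
  rw [← h.integral_mul_comp_mul_ut hX hT ha hαβ hαβX hφ hα hα₁ hβ hβ₁ huY hΦ hΦ₁ hΦ₂ ht]
  exact h.hasDerivAt_integral_mul_comp hX hT ha hαβ hαβX hφ.continuous huY hΦ
    (fun y hy => (hΦ₁ y hy).continuousAt.continuousWithinAt) ht

lemma hasDerivAt_setIntegral_renormalized (h : IsDriftHeatSolutionOn a u ux uxx ut (Ioi 0) T)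
    (hT : IsOpen T) (ha : ContinuousOn a T) (hφ : HasTwoDerivs φ φ₁ φ₂) (hδ : 0 < δ)
    (hφδ : ∀ x ≤ δ, φ x = 0) (hφR : ∀ x, R ≤ x → φ x = 0)
    (huY : ∀ x ∈ Ioi 0, ∀ t ∈ T, u x t ∈ Y) (hΦ : ∀ y ∈ Y, HasDerivAt Φ (Φ₁ y) y)
    (hΦ₁ : ∀ y ∈ Y, HasDerivAt Φ₁ (Φ₂ y) y) (hΦ₂ : ContinuousOn Φ₂ Y) (ht : t ∈ T) :
    HasDerivAt (fun s => ∫ x in Ioi 0, φ x * Φ (u x s))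
      ((∫ x in Ioi 0, (φ₂ x - a t * φ₁ x) * Φ (u x t)) -
        ∫ x in Ioi 0, φ x * Φ₂ (u x t) * ux x t ^ 2) t := by
  set β := max R δ + 1
  have hzero : ∀ x ∉ Ioo (δ / 2) β, φ x = 0 ∧ φ₁ x = 0 ∧ φ₂ x = 0 := fun x hx => by
    have hnear : ∀ᶠ y in 𝓝 x, φ y = 0 := by
      rcases lt_or_ge x δ with hxδ | hxδ
      · exact mem_of_superset (Iio_mem_nhds hxδ) fun y hy => hφδ y (mem_Iio.1 hy).le
      · have hβx : β ≤ x := not_lt.1 fun hlt => hx ⟨by linarith, hlt⟩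
        have hRx : R < x := by linarith [le_max_left R δ]
        exact mem_of_superset (Ioi_mem_nhds hRx) fun y hy => hφR y (mem_Ioi.1 hy).le
    exact ⟨hnear.self_of_nhds, hφ.derivs_eq_zero_of_eventually_eq hnear⟩
  have hδβ : δ / 2 ≤ β := by linarith [le_max_right R δ]
  have hsub : Icc (δ / 2) β ⊆ Ioi 0 := fun x hx => (half_pos hδ).trans_le hx.1
  have hrestrict : ∀ g : ℝ → ℝ, (∀ x ∉ Ioo (δ / 2) β, g x = 0) →
      ∫ x in Ioi 0, g x = ∫ x in (δ / 2)..β, g x := fun g hg => by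
    rw [intervalIntegral.integral_of_le hδβ]
    refine setIntegral_eq_of_subset_of_forall_sdiff_eq_zero measurableSet_Ioi
      (Ioc_subset_Icc_self.trans hsub) fun x hx => hg x fun hx' => hx.2 (Ioo_subset_Ioc_self hx')
  obtain ⟨hα, hα₁, -⟩ := hzero (δ / 2) (by simp)
  obtain ⟨hβ, hβ₁, -⟩ := hzero β (by simp)
  rw [hrestrict _ fun x hx => by simp [hzero x hx], hrestrict _ fun x hx => by simp [hzero x hx]]
  refine (h.hasDerivAt_integral_renormalized isOpen_Ioi hT ha hδβ hsub hφ hα hα₁ hβ hβ₁ huY hΦ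
    hΦ₁ hΦ₂ ht).congr_of_eventuallyEq (.of_forall fun s => ?_)
  exact hrestrict _ fun x hx => by simp [hzero x hx]

end IsDriftHeatSolutionOn

end Renormalization

section Flow

/-- A strictly positive classical solution `f` of the BDY equation
`∂_t f = ∂_vv f + f(0, t) ∂_v f` on `[0, ∞) × [0, ∞)` which is a probability density with mean `μ`
at each time; `ft`, `fv` and `fvv` are its partial derivatives. -/
structure IsBDYFlow (μ : ℝ) (f ft fv fvv : ℝ → ℝ → ℝ) : Prop where
  continuousOn : ContinuousOn (fun p : ℝ × ℝ => f p.1 p.2) (Ici 0 ×ˢ Ici 0)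
  hasDerivAt_v : ∀ v t : ℝ, 0 ≤ v → 0 ≤ t → HasDerivAt (fun w => f w t) (fv v t) v
  hasDerivAt_vv : ∀ v t : ℝ, 0 ≤ v → 0 ≤ t → HasDerivAt (fun w => fv w t) (fvv v t) v
  hasDerivAt_t : ∀ v t : ℝ, 0 ≤ v → 0 ≤ t → HasDerivAt (fun s => f v s) (ft v t) t
  pos : ∀ v t : ℝ, 0 ≤ v → 0 ≤ t → 0 < f v t
  integrableOn : ∀ t : ℝ, 0 ≤ t → IntegrableOn (fun v => f v t) (Ioi 0)
  integrableOn_mul_self : ∀ t : ℝ, 0 ≤ t → IntegrableOn (fun v => v * f v t) (Ioi 0)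
  mass : ∀ t : ℝ, 0 ≤ t → ∫ v in Ioi (0 : ℝ), f v t = 1
  mean : ∀ t : ℝ, 0 ≤ t → ∫ v in Ioi (0 : ℝ), v * f v t = μ
  equation : ∀ v t : ℝ, 0 < v → 0 ≤ t → ft v t = fvv v t + f 0 t * fv v t

namespace IsBDYFlow

variable {μ : ℝ} {f ft fv fvv : ℝ → ℝ → ℝ} {φ φ₁ φ₂ g : ℝ → ℝ} {δ R t A B C : ℝ}

lemma isDriftHeatSolutionOn (h : IsBDYFlow μ f ft fv fvv) :
    IsDriftHeatSolutionOn (f 0) f fv fvv ft (Ioi 0) (Ioi 0) where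
  continuousOn := h.continuousOn.mono (prod_mono Ioi_subset_Ici_self Ioi_subset_Ici_self)
  hasDerivAt_x v hv t ht := h.hasDerivAt_v v t (le_of_lt hv) (le_of_lt ht)
  hasDerivAt_xx v hv t ht := h.hasDerivAt_vv v t (le_of_lt hv) (le_of_lt ht)
  hasDerivAt_t v hv t ht := h.hasDerivAt_t v t (le_of_lt hv) (le_of_lt ht)
  equation v hv t ht := h.equation v t hv (le_of_lt ht)

lemma continuousOn_f_zero (h : IsBDYFlow μ f ft fv fvv) : ContinuousOn (f 0) (Ici 0) :=
  fun t ht => (h.hasDerivAt_t 0 t le_rfl ht).continuousAt.continuousWithinAt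

lemma continuousOn_v (h : IsBDYFlow μ f ft fv fvv) (ht : 0 ≤ t) :
    ContinuousOn (fun v => f v t) (Ici 0) :=
  fun v hv => (h.hasDerivAt_v v t hv ht).continuousAt.continuousWithinAt

lemma continuousOn_fv (h : IsBDYFlow μ f ft fv fvv) (ht : 0 ≤ t) :
    ContinuousOn (fun v => fv v t) (Ici 0) :=
  fun v hv => (h.hasDerivAt_vv v t hv ht).continuousAt.continuousWithinAt

lemma mean_pos (h : IsBDYFlow μ f ft fv fvv) : 0 < μ := by
  have hpos : ∀ v ∈ Ioi (0 : ℝ), 0 < v * f v 0 := fun v hv =>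
    mul_pos hv (h.pos v 0 (le_of_lt hv) le_rfl)
  have hsupport : Ioi 0 ⊆ Function.support fun v => v * f v 0 := fun v hv => (hpos v hv).ne'
  rw [← h.mean 0 le_rfl, setIntegral_pos_iff_support_of_nonneg_ae
    ((ae_restrict_mem measurableSet_Ioi).mono fun v hv => (hpos v hv).le)
    (h.integrableOn_mul_self 0 le_rfl), inter_eq_self_of_subset_right hsupport]
  simp

lemma integrableOn_affine_mul (h : IsBDYFlow μ f ft fv fvv) (A B : ℝ) (ht : 0 ≤ t) :
    IntegrableOn (fun v => (A + B * v) * f v t) (Ioi 0) := by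
  refine ((h.integrableOn t ht).const_mul A).add ((h.integrableOn_mul_self t ht).const_mul B)
    |>.congr (.of_forall fun v => ?_)
  simp only [Pi.add_apply]
  ring

lemma integral_affine_mul (h : IsBDYFlow μ f ft fv fvv) (A B : ℝ) (ht : 0 ≤ t) :
    ∫ v in Ioi 0, (A + B * v) * f v t = A + B * μ := by
  simp only [add_mul, mul_assoc]
  rw [integral_add ((h.integrableOn t ht).const_mul A)
    ((h.integrableOn_mul_self t ht).const_mul B), integral_const_mul, integral_const_mul,
    h.mass t ht, h.mean t ht, mul_one]

lemma abs_mul_le (h : IsBDYFlow μ f ft fv fvv) (hg : ∀ v, 0 < v → |g v| ≤ A + B * v)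
    (ht : 0 ≤ t) : ∀ᵐ v ∂volume.restrict (Ioi 0), ‖g v * f v t‖ ≤ (A + B * v) * f v t := by
  filter_upwards [ae_restrict_mem measurableSet_Ioi] with v hv
  have hf := h.pos v t (le_of_lt hv) ht
  rw [norm_mul, Real.norm_of_nonneg hf.le]
  exact mul_le_mul_of_nonneg_right (hg v hv) hf.le

lemma integrableOn_mul (h : IsBDYFlow μ f ft fv fvv) (hgc : Continuous g)
    (hg : ∀ v, 0 < v → |g v| ≤ A + B * v) (ht : 0 ≤ t) :
    IntegrableOn (fun v => g v * f v t) (Ioi 0) :=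
  (h.integrableOn_affine_mul A B ht).mono' (hgc.continuousOn.mul
    ((h.continuousOn_v ht).mono Ioi_subset_Ici_self) |>.aestronglyMeasurable measurableSet_Ioi)
    (h.abs_mul_le hg ht)

lemma abs_integral_mul_le (h : IsBDYFlow μ f ft fv fvv)
    (hg : ∀ v, 0 < v → |g v| ≤ A + B * v) (ht : 0 ≤ t) :
    |∫ v in Ioi 0, g v * f v t| ≤ A + B * μ :=
  (norm_integral_le_of_norm_le (h.integrableOn_affine_mul A B ht) (h.abs_mul_le hg ht)).trans
    (h.integral_affine_mul A B ht).le

lemma abs_integral_mul_sub_le (h : IsBDYFlow μ f ft fv fvv) {k : ℝ → ℝ} {A' B' : ℝ}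
    (hgc : Continuous g) (hkc : Continuous k) (hg : ∀ v, 0 < v → |g v| ≤ A + B * v)
    (hkg : ∀ v, 0 < v → |k v - g v| ≤ A' + B' * v) (ht : 0 ≤ t) :
    |(∫ v in Ioi 0, k v * f v t) - ∫ v in Ioi 0, g v * f v t| ≤ A' + B' * μ := by
  have hsub : ∀ v, k v * f v t = (k v - g v) * f v t + g v * f v t := fun v => by ring
  simp_rw [hsub]
  rw [integral_add (h.integrableOn_mul (g := fun v => k v - g v) (hkc.sub hgc) hkg ht)
    (h.integrableOn_mul hgc hg ht), add_sub_cancel_right]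
  exact h.abs_integral_mul_le hkg ht

lemma tendsto_integral_mul {ι : Type*} {l : Filter ι} [l.IsCountablyGenerated]
    (h : IsBDYFlow μ f ft fv fvv) {G : ι → ℝ → ℝ} (hG : ∀ᶠ i in l, Continuous (G i))
    (hbd : ∀ᶠ i in l, ∀ v, 0 < v → |G i v| ≤ A + B * v)
    (hlim : ∀ v, 0 < v → Tendsto (fun i => G i v) l (𝓝 (g v))) (ht : 0 ≤ t) :
    Tendsto (fun i => ∫ v in Ioi 0, G i v * f v t) l (𝓝 (∫ v in Ioi 0, g v * f v t)) := by
  refine tendsto_integral_filter_of_dominated_convergence (fun v => (A + B * v) * f v t) ?_ ?_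
    (h.integrableOn_affine_mul A B ht) ?_
  · filter_upwards [hG] with i hi
    exact (hi.continuousOn.mul
      ((h.continuousOn_v ht).mono Ioi_subset_Ici_self)).aestronglyMeasurable measurableSet_Ioi
  · filter_upwards [hbd] with i hi using h.abs_mul_le hi ht
  · filter_upwards [ae_restrict_mem measurableSet_Ioi] with v hv using (hlim v hv).mul_const _

lemma hasDerivAt_integral_mul_of_compact (h : IsBDYFlow μ f ft fv fvv)
    (hφ : HasTwoDerivs φ φ₁ φ₂) (hδ : 0 < δ) (hφδ : ∀ v ≤ δ, φ v = 0)
    (hφR : ∀ v, R ≤ v → φ v = 0) (ht : 0 < t) :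
    HasDerivAt (fun s => ∫ v in Ioi 0, φ v * f v s)
      (∫ v in Ioi 0, (φ₂ v - f 0 t * φ₁ v) * f v t) t := by
  simpa using h.isDriftHeatSolutionOn.hasDerivAt_setIntegral_renormalized isOpen_Ioi
    (h.continuousOn_f_zero.mono Ioi_subset_Ici_self) hφ hδ hφδ hφR (fun _ _ _ _ => mem_univ _)
    (fun y _ => hasDerivAt_id y) (fun y _ => hasDerivAt_const y 1) continuousOn_const ht

lemma abs_integral_generator_sub_le (h : IsBDYFlow μ f ft fv fvv) {ψ ψ₁ ψ₂ : ℝ → ℝ} {M : ℝ}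
    (hφ : HasTwoDerivs φ φ₁ φ₂) (hψ : HasTwoDerivs ψ ψ₁ ψ₂) (hC : ∀ v, |φ₁ v| ≤ C ∧ |φ₂ v| ≤ C)
    (hM : ∀ v, 0 < v → |ψ₁ v - φ₁ v| ≤ M * (1 + v) ∧ |ψ₂ v - φ₂ v| ≤ M * (1 + v)) (ht : 0 ≤ t) :
    |(∫ v in Ioi 0, (ψ₂ v - f 0 t * ψ₁ v) * f v t) -
        ∫ v in Ioi 0, (φ₂ v - f 0 t * φ₁ v) * f v t| ≤ M * (1 + f 0 t) * (1 + μ) := by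
  have ha := h.pos 0 t le_rfl ht
  have hcomb : ∀ {p q N : ℝ}, |p| ≤ N → |q| ≤ N → |q - f 0 t * p| ≤ N * (1 + f 0 t) :=
    fun {p q N} hp hq => calc
      |q - f 0 t * p| ≤ |q| + |f 0 t * p| := abs_sub _ _
      _ ≤ N + f 0 t * N := by rw [abs_mul, abs_of_pos ha]; gcongr
      _ = N * (1 + f 0 t) := by ring
  calc _ ≤ M * (1 + f 0 t) + M * (1 + f 0 t) * μ := by
        refine h.abs_integral_mul_sub_le (A := C * (1 + f 0 t)) (B := 0)
          (hφ.continuous_snd.sub (hφ.continuous_fst.const_mul _))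
          (hψ.continuous_snd.sub (hψ.continuous_fst.const_mul _)) (fun v _ => ?_)
          (fun v hv => ?_) ht
        · simpa using hcomb (hC v).1 (hC v).2
        · convert hcomb (hM v hv).1 (hM v hv).2 using 1
          · ring_nf
          · ring
    _ = M * (1 + f 0 t) * (1 + μ) := by ring

lemma hasDerivAt_integral_mul (h : IsBDYFlow μ f ft fv fvv) (hφ : HasTwoDerivs φ φ₁ φ₂)
    (hδ : 0 < δ) (hφδ : ∀ v ≤ δ, φ v = 0) (hC : ∀ v, |φ₁ v| ≤ C ∧ |φ₂ v| ≤ C) (ht : 0 < t) :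
    HasDerivAt (fun s => ∫ v in Ioi 0, φ v * f v s)
      (∫ v in Ioi 0, (φ₂ v - f 0 t * φ₁ v) * f v t) t := by
  obtain ⟨K, hK₀, hK⟩ := hφ.exists_truncation (hφδ 0 hδ.le) hC
  choose! ψ₁ ψ₂ hψ hψbd using hK
  have hφC : ∀ v, 0 ≤ v → |φ v| ≤ C * v := fun v hv => by
    simpa [hφδ 0 hδ.le, abs_of_nonneg hv] using hφ.abs_sub_le (fun x => (hC x).1) 0 v
  obtain ⟨ε, hε, hεt⟩ := Metric.nhds_basis_closedBall.mem_iff.1 (Ioi_mem_nhds ht)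
  have hpos : ∀ s ∈ Metric.ball t ε, 0 < s := fun s hs => hεt (Metric.ball_subset_closedBall hs)
  obtain ⟨A, hA⟩ := (isCompact_closedBall t ε).exists_bound_of_continuousOn
    (h.continuousOn_f_zero.mono (hεt.trans Ioi_subset_Ici_self))
  have hL : ∀ᶠ L : ℝ in atTop, 1 ≤ L := eventually_ge_atTop 1
  refine hasDerivAt_of_tendstoUniformlyOn (l := atTop) (𝕜 := ℝ)
    (f := fun L s => ∫ v in Ioi 0, φ v * cutoff L v * f v s)
    (f' := fun L s => ∫ v in Ioi 0, (ψ₂ L v - f 0 s * ψ₁ L v) * f v s)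
    (g' := fun s => ∫ v in Ioi 0, (φ₂ v - f 0 s * φ₁ v) * f v s)
    Metric.isOpen_ball ?_ ?_ ?_ (Metric.mem_ball_self hε)
  · refine Metric.tendstoUniformlyOn_iff.2 fun e he => ?_
    have hrate : Tendsto (fun L => K * (1 + A) * (1 + μ) / L) atTop (𝓝 0) :=
      tendsto_const_nhds.div_atTop tendsto_id
    filter_upwards [hL, hrate.eventually_lt_const he] with L hL hlt s hs
    rw [dist_comm, Real.dist_eq]
    refine lt_of_le_of_lt ?_ hlt
    calc _ ≤ K / L * (1 + f 0 s) * (1 + μ) :=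
          h.abs_integral_generator_sub_le hφ (hψ L hL) hC (hψbd L hL) (hpos s hs).le
      _ ≤ K / L * (1 + A) * (1 + μ) := by
          have := h.mean_pos.le
          have := (le_abs_self _).trans (hA s (Metric.ball_subset_closedBall hs))
          gcongr
      _ = K * (1 + A) * (1 + μ) / L := by ring
  · filter_upwards [hL] with L hL s hs
    have hL₀ : 0 < L := by linarith
    exact h.hasDerivAt_integral_mul_of_compact (hψ L hL) hδ (fun v hv => by rw [hφδ v hv, zero_mul])
      (fun v hv => by rw [cutoff_eq_zero hL₀ hv, mul_zero]) (hpos s hs)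
  · intro s hs
    refine h.tendsto_integral_mul (A := 0) (B := C) ?_ (.of_forall fun L v hv => ?_) ?_
      (hpos s hs).le
    · filter_upwards [hL] with L hL using (hψ L hL).continuous
    · rw [abs_mul, abs_of_nonneg cutoff_nonneg, zero_add]
      exact (mul_le_of_le_one_right (abs_nonneg _) cutoff_le_one).trans (hφC v hv.le)
    · intro v hv
      refine tendsto_const_nhds.congr' ?_
      filter_upwards [eventually_ge_atTop v] with L hvL
      rw [cutoff_eq_one (hv.trans_le hvL) hvL, mul_one]

end IsBDYFlow

end Flow

section Ramp

/-- A smooth convex ramp vanishing on `(-∞, R]` and of slope `1` on `[2R, ∞)`, for `R > 0`. -/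
noncomputable def ramp (R v : ℝ) : ℝ := ∫ w in (0 : ℝ)..v, Real.smoothTransition (w / R - 1)

/-- The primitive of `ramp R` vanishing at `0`; the difference `rampPrimitive δ - rampPrimitive R`
is a test function that mimics `v ^ 2 / 2` between `δ` and `R` and has linear growth. -/
noncomputable def rampPrimitive (R v : ℝ) : ℝ := ∫ w in (0 : ℝ)..v, ramp R w

variable {δ R v : ℝ}

lemma continuous_smoothTransition_div_sub_one (R : ℝ) :
    Continuous fun v => Real.smoothTransition (v / R - 1) :=
  Real.smoothTransition.continuous.comp (by fun_prop)

lemma hasTwoDerivs_ramp (R : ℝ) : HasTwoDerivs (ramp R)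
    (fun v => Real.smoothTransition (v / R - 1))
    (fun v => deriv Real.smoothTransition (v / R - 1) / R) where
  hasDerivAt v :=
    ((continuous_smoothTransition_div_sub_one R).integral_hasStrictDerivAt 0 v).hasDerivAt
  hasDerivAt' v := by
    have haff : HasDerivAt (fun v => v / R - 1) (1 / R) v :=
      ((hasDerivAt_id v).div_const R).sub_const 1
    exact ((hasTwoDerivs_smoothTransition.hasDerivAt _).comp v haff).congr_deriv (mul_one_div _ _)
  continuous_snd := (hasTwoDerivs_smoothTransition.continuous_fst.comp (by fun_prop)).div_const R

lemma hasTwoDerivs_rampPrimitive (R : ℝ) : HasTwoDerivs (rampPrimitive R) (ramp R)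
    (fun v => Real.smoothTransition (v / R - 1)) where
  hasDerivAt v := ((hasTwoDerivs_ramp R).continuous.integral_hasStrictDerivAt 0 v).hasDerivAt
  hasDerivAt' := (hasTwoDerivs_ramp R).hasDerivAt
  continuous_snd := (hasTwoDerivs_ramp R).continuous_fst

lemma ramp_eq_zero (hR : 0 < R) (hv : v ≤ R) : ramp R v = 0 := by
  refine intervalIntegral.integral_zero_ae (.of_forall fun w hw => ?_)
  have hwR : w ≤ R := hw.2.trans (max_le hR.le hv)
  exact Real.smoothTransition.zero_of_nonpos (by linarith [(div_le_one hR).2 hwR])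

lemma rampPrimitive_eq_zero (hR : 0 < R) (hv : v ≤ R) : rampPrimitive R v = 0 :=
  intervalIntegral.integral_zero_ae (.of_forall fun _ hw =>
    ramp_eq_zero hR (hw.2.trans (max_le hR.le hv)))

lemma ramp_le_ramp (hδ : 0 < δ) (hδR : δ ≤ R) : ramp R v ≤ ramp δ v := by
  rcases le_or_gt v δ with hv | hv
  · rw [ramp_eq_zero hδ hv, ramp_eq_zero (hδ.trans_le hδR) (hv.trans hδR)]
  · refine intervalIntegral.integral_mono_on (hδ.le.trans hv.le)
      ((continuous_smoothTransition_div_sub_one R).intervalIntegrable _ _)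
      ((continuous_smoothTransition_div_sub_one δ).intervalIntegrable _ _) fun w hw => ?_
    refine Real.smoothTransition.monotone (sub_le_sub_right ?_ 1)
    exact div_le_div_of_nonneg_left hw.1 hδ hδR

lemma ramp_nonneg (hR : 0 < R) : 0 ≤ ramp R v := by
  rcases le_or_gt v R with hv | hv
  · rw [ramp_eq_zero hR hv]
  · exact intervalIntegral.integral_nonneg (hR.le.trans hv.le) fun w _ =>
      Real.smoothTransition.nonneg _

lemma ramp_le_self (hv : 0 ≤ v) : ramp R v ≤ v := by
  calc ramp R v ≤ ∫ _ in (0 : ℝ)..v, (1 : ℝ) :=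
        intervalIntegral.integral_mono_on hv
          ((continuous_smoothTransition_div_sub_one R).intervalIntegrable _ _)
          intervalIntegrable_const fun w _ => Real.smoothTransition.le_one _
    _ = v := by simp

lemma rampPrimitive_le_rampPrimitive (hδ : 0 < δ) (hδR : δ ≤ R) :
    rampPrimitive R v ≤ rampPrimitive δ v := by
  rcases le_or_gt v δ with hv | hv
  · rw [rampPrimitive_eq_zero hδ hv, rampPrimitive_eq_zero (hδ.trans_le hδR) (hv.trans hδR)]
  · exact intervalIntegral.integral_mono_on (hδ.le.trans hv.le)
      ((hasTwoDerivs_ramp R).continuous.intervalIntegrable _ _)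
      ((hasTwoDerivs_ramp δ).continuous.intervalIntegrable _ _) fun w _ => ramp_le_ramp hδ hδR

lemma sub_le_ramp (hR : 0 < R) : v - 2 * R ≤ ramp R v := by
  rcases le_or_gt v (2 * R) with hv | hv
  · linarith [ramp_nonneg (v := v) hR]
  · have hc := continuous_smoothTransition_div_sub_one R
    have htail : ∫ w in (2 * R)..v, Real.smoothTransition (w / R - 1) = v - 2 * R := by
      rw [intervalIntegral.integral_congr (g := fun _ => 1) fun w hw => ?_]
      · simp
      · rw [uIcc_of_le hv.le] at hw
        exact Real.smoothTransition.one_of_one_le (by linarith [(le_div_iff₀ hR).2 hw.1])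
    rw [ramp, ← intervalIntegral.integral_add_adjacent_intervals
      (hc.intervalIntegrable 0 (2 * R)) (hc.intervalIntegrable _ _), htail]
    exact le_add_of_nonneg_left (ramp_nonneg hR)

lemma abs_ramp_sub_ramp_le (hδ : 0 < δ) (hδR : δ ≤ R) : |ramp δ v - ramp R v| ≤ 2 * R := by
  have hR := hδ.trans_le hδR
  rw [abs_of_nonneg (sub_nonneg.2 (ramp_le_ramp hδ hδR))]
  rcases le_or_gt 0 v with hv | hv
  · linarith [ramp_le_self (R := δ) hv, sub_le_ramp (v := v) hR]
  · rw [ramp_eq_zero hδ (hv.le.trans hδ.le), ramp_eq_zero hR (hv.le.trans hR.le)]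
    linarith

lemma abs_rampPrimitive_sub_le (hδ : 0 < δ) (hδR : δ ≤ R) (hv : 0 ≤ v) :
    |rampPrimitive δ v - rampPrimitive R v| ≤ 2 * R * v := by
  simpa [rampPrimitive_eq_zero hδ hδ.le, rampPrimitive_eq_zero (hδ.trans_le hδR)
    (hδ.trans_le hδR).le, abs_of_nonneg hv] using ((hasTwoDerivs_rampPrimitive δ).sub
      (hasTwoDerivs_rampPrimitive R)).abs_sub_le (fun _ => abs_ramp_sub_ramp_le hδ hδR) 0 v

end Ramp

section TimeAverage

namespace IsBDYFlow

variable {μ : ℝ} {f ft fv fvv : ℝ → ℝ → ℝ} {φ φ₁ φ₂ : ℝ → ℝ} {δ R s t m κ A B C : ℝ}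

lemma integral_generator_le (h : IsBDYFlow μ f ft fv fvv) (hφ : HasTwoDerivs φ φ₁ φ₂)
    (hC : ∀ v, |φ₁ v| ≤ C ∧ |φ₂ v| ≤ C) (hAB : ∀ v, 0 < v → φ₂ v ≤ A + B * v) (ht : 0 ≤ t)
    (hm : m ≤ ∫ v in Ioi 0, φ₁ v * f v t) :
    ∫ v in Ioi 0, (φ₂ v - f 0 t * φ₁ v) * f v t ≤ A + B * μ - f 0 t * m := by
  have hi₁ := h.integrableOn_mul (A := C) (B := 0) hφ.continuous_fst
    (fun v _ => by simpa using (hC v).1) ht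
  have hi₂ := h.integrableOn_mul (A := C) (B := 0) hφ.continuous_snd
    (fun v _ => by simpa using (hC v).2) ht
  simp only [sub_mul, mul_assoc]
  rw [integral_sub hi₂ (hi₁.const_mul _), integral_const_mul, ← h.integral_affine_mul A B ht]
  refine sub_le_sub (setIntegral_mono_on hi₂ (h.integrableOn_affine_mul A B ht) measurableSet_Ioi
    fun v hv => ?_) (mul_le_mul_of_nonneg_left hm (h.pos 0 t le_rfl ht).le)
  exact mul_le_mul_of_nonneg_right (hAB v hv) (h.pos v t (le_of_lt hv) ht).le

lemma integral_mul_add_integral_f_zero_le (h : IsBDYFlow μ f ft fv fvv)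
    (hφ : HasTwoDerivs φ φ₁ φ₂) (hδ : 0 < δ) (hφδ : ∀ v ≤ δ, φ v = 0)
    (hC : ∀ v, |φ₁ v| ≤ C ∧ |φ₂ v| ≤ C) (hAB : ∀ v, 0 < v → φ₂ v ≤ A + B * v) (hs : 0 < s)
    (hst : s ≤ t) (hm : ∀ r ∈ Icc s t, m ≤ ∫ v in Ioi 0, φ₁ v * f v r) :
    (∫ v in Ioi 0, φ v * f v t) + m * ∫ r in s..t, f 0 r ≤
      (∫ v in Ioi 0, φ v * f v s) + (A + B * μ) * (t - s) := by
  have hderiv : ∀ r ∈ Icc s t, HasDerivAt (fun r => ∫ v in Ioi 0, φ v * f v r)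
      (∫ v in Ioi 0, (φ₂ v - f 0 r * φ₁ v) * f v r) r := fun r hr =>
    h.hasDerivAt_integral_mul hφ hδ hφδ hC (hs.trans_le hr.1)
  have hf₀ : ContinuousOn (f 0) (Icc s t) :=
    h.continuousOn_f_zero.mono (Icc_subset_Ici_self.trans (Ici_subset_Ici.2 hs.le))
  have hcont : ContinuousOn (fun r => A + B * μ - f 0 r * m) (Icc s t) := by fun_prop
  have hle := intervalIntegral.sub_le_integral_of_hasDeriv_right_of_le hst
    (fun r hr => (hderiv r hr).continuousAt.continuousWithinAt)
    (fun r hr => (hderiv r (Ioo_subset_Icc_self hr)).hasDerivWithinAt) hcont.integrableOn_Icc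
    fun r hr => h.integral_generator_le hφ hC hAB (hs.trans hr.1).le
      (hm r (Ioo_subset_Icc_self hr))
  rw [intervalIntegral.integral_sub intervalIntegrable_const
    ((hf₀.intervalIntegrable_of_Icc hst).mul_const m),
    intervalIntegral.integral_const, intervalIntegral.integral_mul_const, smul_eq_mul] at hle
  linarith

lemma exists_integral_ramp_mul_le (h : IsBDYFlow μ f ft fv fvv) : ∃ E, ∀ R s t, 0 < R → 0 < s →
    t ∈ Icc s (s + R) →
      ∫ v in Ioi 0, ramp R v * f v t ≤ (∫ v in Ioi 0, ramp R v * f v s) + E / R := by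
  obtain ⟨E, hE⟩ := exists_abs_deriv_smoothTransition_le
  have hE₀ : 0 ≤ E := (abs_nonneg _).trans (hE 0).1
  refine ⟨E * μ, fun R s t hR hs hst => ?_⟩
  have hρ := hasTwoDerivs_ramp R
  have hC : ∀ v, |Real.smoothTransition (v / R - 1)| ≤ max 1 (E / R) ∧
      |deriv Real.smoothTransition (v / R - 1) / R| ≤ max 1 (E / R) := fun v => by
    rw [abs_of_nonneg (Real.smoothTransition.nonneg _), abs_div, abs_of_pos hR]
    exact ⟨(Real.smoothTransition.le_one _).trans (le_max_left _ _),
      (div_le_div_of_nonneg_right (hE _).1 hR.le).trans (le_max_right _ _)⟩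
  have hsnd : ∀ v, 0 < v → deriv Real.smoothTransition (v / R - 1) / R ≤ 0 + E / R ^ 2 * v := by
    intro v hv
    rcases lt_or_ge v R with hvR | hvR
    · rw [(hρ.derivs_eq_zero_of_eventually_eq (mem_of_superset (Iio_mem_nhds hvR) fun w hw =>
        ramp_eq_zero hR (mem_Iio.1 hw).le)).2]
      positivity
    · calc _ ≤ E / R := div_le_div_of_nonneg_right ((le_abs_self _).trans (hE _).1) hR.le
        _ = E / R ^ 2 * R := by field_simp
        _ ≤ 0 + E / R ^ 2 * v := by rw [zero_add]; gcongr
  have hle := h.integral_mul_add_integral_f_zero_le hρ hR (fun v => ramp_eq_zero hR) hC hsnd hs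
    hst.1 (m := 0) fun r hr => setIntegral_nonneg measurableSet_Ioi fun v hv =>
      mul_nonneg (Real.smoothTransition.nonneg _) (h.pos v r (le_of_lt hv) (hs.le.trans hr.1)).le
  rw [zero_mul, add_zero, zero_add] at hle
  refine hle.trans (add_le_add_right ?_ _)
  calc E / R ^ 2 * μ * (t - s) ≤ E / R ^ 2 * μ * R := by
        have := h.mean_pos.le
        have : t - s ≤ R := by linarith [hst.2]
        gcongr
    _ = E * μ / R := by field_simp

lemma le_integral_ramp_sub_ramp_mul (h : IsBDYFlow μ f ft fv fvv) (hδ : 0 < δ) (hR : 0 < R)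
    (ht : 0 ≤ t) : μ - 2 * δ - ∫ v in Ioi 0, ramp R v * f v t ≤
      ∫ v in Ioi 0, (ramp δ v - ramp R v) * f v t := by
  have hi : ∀ {r}, 0 < r → IntegrableOn (fun v => ramp r v * f v t) (Ioi 0) := fun {r} hr =>
    h.integrableOn_mul (A := 0) (B := 1) (hasTwoDerivs_ramp r).continuous
      (fun v hv => by simpa [abs_of_nonneg (ramp_nonneg hr)] using ramp_le_self hv.le) ht
  have hmean : μ - 2 * δ = ∫ v in Ioi 0, (-2 * δ + 1 * v) * f v t := by
    rw [h.integral_affine_mul _ _ ht]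
    ring
  simp only [sub_mul]
  rw [integral_sub (hi hδ) (hi hR), hmean]
  refine sub_le_sub_right (setIntegral_mono_on (h.integrableOn_affine_mul _ _ ht) (hi hδ)
    measurableSet_Ioi fun v hv => ?_) _
  exact mul_le_mul_of_nonneg_right (by linarith [sub_le_ramp (v := v) hδ])
    (h.pos v t (le_of_lt hv) ht).le

lemma tendsto_integral_ramp_mul (h : IsBDYFlow μ f ft fv fvv) (ht : 0 ≤ t) :
    Tendsto (fun R => ∫ v in Ioi 0, ramp R v * f v t) atTop (𝓝 0) := by
  have hlim := h.tendsto_integral_mul (l := atTop) (G := ramp) (g := 0) (A := 0) (B := 1)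
    (.of_forall fun R => (hasTwoDerivs_ramp R).continuous) ?_ (fun v _ => ?_) ht
  · simpa using hlim
  · filter_upwards [eventually_gt_atTop 0] with R hR v hv
    simpa [abs_of_nonneg (ramp_nonneg hR)] using ramp_le_self hv.le
  · refine tendsto_const_nhds.congr' ?_
    filter_upwards [eventually_ge_atTop v, eventually_gt_atTop 0] with R hvR hR
    exact (ramp_eq_zero hR hvR).symm

lemma tendsto_integral_rampPrimitive_div (h : IsBDYFlow μ f ft fv fvv) (hδ : 0 < δ) (ht : 0 ≤ t) :
    Tendsto (fun R => (∫ v in Ioi 0, (rampPrimitive δ v - rampPrimitive R v) * f v t) / R)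
      atTop (𝓝 0) := by
  have hlim := h.tendsto_integral_mul (l := atTop) (g := 0) (A := 0) (B := 2)
    (G := fun R v => (rampPrimitive δ v - rampPrimitive R v) / R)
    (.of_forall fun R => ((hasTwoDerivs_rampPrimitive δ).sub
      (hasTwoDerivs_rampPrimitive R)).continuous.div_const R) ?_ (fun v _ => ?_) ht
  · simpa [div_mul_eq_mul_div, integral_div] using hlim
  · filter_upwards [eventually_ge_atTop δ] with R hδR v hv
    have hR : 0 < R := hδ.trans_le hδR
    rw [abs_div, abs_of_pos hR, div_le_iff₀ hR]
    exact (abs_rampPrimitive_sub_le hδ hδR hv.le).trans_eq (by ring)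
  · have hconst : Tendsto (fun R => rampPrimitive δ v / R) atTop (𝓝 0) :=
      tendsto_const_nhds.div_atTop tendsto_id
    refine hconst.congr' ?_
    filter_upwards [eventually_ge_atTop v, eventually_gt_atTop 0] with R hvR hR
    rw [rampPrimitive_eq_zero hR hvR, sub_zero]

lemma mul_integral_f_zero_le (h : IsBDYFlow μ f ft fv fvv) (hδ : 0 < δ) (hδR : δ ≤ R)
    (hs : 0 < s) (hst : s ≤ t)
    (hm : ∀ r ∈ Icc s t, m ≤ ∫ v in Ioi 0, (ramp δ v - ramp R v) * f v r) :
    m * ∫ r in s..t, f 0 r ≤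
      (∫ v in Ioi 0, (rampPrimitive δ v - rampPrimitive R v) * f v s) + (t - s) := by
  have hC : ∀ v, |ramp δ v - ramp R v| ≤ max 1 (2 * R) ∧
      |Real.smoothTransition (v / δ - 1) - Real.smoothTransition (v / R - 1)| ≤ max 1 (2 * R) :=
    fun v => ⟨(abs_ramp_sub_ramp_le hδ hδR).trans (le_max_right _ _),
      (abs_sub_le_of_nonneg_of_le (Real.smoothTransition.nonneg _) (Real.smoothTransition.le_one _)
        (Real.smoothTransition.nonneg _) (Real.smoothTransition.le_one _)).trans (le_max_left _ _)⟩
  have hle := h.integral_mul_add_integral_f_zero_le (A := 1) (B := 0)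
    ((hasTwoDerivs_rampPrimitive δ).sub (hasTwoDerivs_rampPrimitive R)) hδ
    (fun v hv => by rw [rampPrimitive_eq_zero hδ hv,
      rampPrimitive_eq_zero (hδ.trans_le hδR) (hv.trans hδR), sub_zero]) hC
    (fun v _ => by linarith [Real.smoothTransition.le_one (v / δ - 1),
      Real.smoothTransition.nonneg (v / R - 1)]) hs hst hm
  have hnonneg : 0 ≤ ∫ v in Ioi 0, (rampPrimitive δ v - rampPrimitive R v) * f v t :=
    setIntegral_nonneg measurableSet_Ioi fun v hv => mul_nonneg
      (sub_nonneg.2 (rampPrimitive_le_rampPrimitive hδ hδR))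
      (h.pos v t (le_of_lt hv) (hs.le.trans hst)).le
  linarith

lemma eventually_integral_f_zero_le (h : IsBDYFlow μ f ft fv fvv) (hκ : 1 / μ < κ) (hs : 0 < s) :
    ∀ᶠ R in atTop, ∫ t in s..s + R, f 0 t ≤ κ * R := by
  have hμ := h.mean_pos
  have hκ₀ : 0 < κ := (one_div_pos.2 hμ).trans hκ
  obtain ⟨δ, hδ, hδμ, hδκ⟩ : ∃ δ, 0 < δ ∧ 0 < μ - 2 * δ ∧ 1 / (μ - 2 * δ) < κ := by
    have hμκ : 1 / κ < μ := (one_div_lt hκ₀ hμ).2 hκ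
    have hδμ : 0 < μ - 2 * ((μ - 1 / κ) / 4) := by linarith [one_div_pos.2 hκ₀]
    refine ⟨(μ - 1 / κ) / 4, by linarith, hδμ, ?_⟩
    rw [one_div_lt hδμ hκ₀]
    linarith
  obtain ⟨E, hE⟩ := h.exists_integral_ramp_mul_le
  set ρ : ℝ → ℝ := fun R => ∫ v in Ioi 0, ramp R v * f v s
  set G : ℝ → ℝ := fun R => ∫ v in Ioi 0, (rampPrimitive δ v - rampPrimitive R v) * f v s
  have hden : Tendsto (fun R => μ - 2 * δ - (ρ R + E / R)) atTop (𝓝 (μ - 2 * δ)) := by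
    simpa using tendsto_const_nhds.sub ((h.tendsto_integral_ramp_mul hs.le).add
      (tendsto_const_nhds.div_atTop tendsto_id))
  have hbound : Tendsto (fun R => (G R / R + 1) / (μ - 2 * δ - (ρ R + E / R))) atTop
      (𝓝 (1 / (μ - 2 * δ))) := by
    rw [show (1 : ℝ) / (μ - 2 * δ) = (0 + 1) / (μ - 2 * δ) by rw [zero_add]]
    exact ((h.tendsto_integral_rampPrimitive_div hδ hs.le).add_const 1).div hden hδμ.ne'
  filter_upwards [hbound.eventually_lt_const hδκ, hden.eventually_const_lt hδμ,
    eventually_ge_atTop δ] with R hRκ hm hδR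
  have hR : 0 < R := hδ.trans_le hδR
  have hle := h.mul_integral_f_zero_le hδ hδR hs (le_add_of_nonneg_right hR.le)
    (m := μ - 2 * δ - (ρ R + E / R)) fun r hr =>
      (sub_le_sub_left (hE R s r hR hs hr) _).trans
        (h.le_integral_ramp_sub_ramp_mul hδ hR (hs.le.trans hr.1))
  calc ∫ t in s..s + R, f 0 t ≤ (G R + R) / (μ - 2 * δ - (ρ R + E / R)) := by
        rw [le_div_iff₀' hm]
        linarith
    _ = (G R / R + 1) / (μ - 2 * δ - (ρ R + E / R)) * R := by field_simp
    _ ≤ κ * R := by gcongr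

end IsBDYFlow

end TimeAverage

section RelativeEntropy

/-- The relative entropy `∫₀^∞ u log (u / g)` of a density `u` with respect to a density `g`. -/
noncomputable def relativeEntropy (u g : ℝ → ℝ) : ℝ :=
  ∫ v in Ioi 0, u v * Real.log (u v / g v)

/-- The Boltzmann–Gibbs density with mean `μ`. -/
noncomputable def boltzmannGibbs (μ v : ℝ) : ℝ := 1 / μ * Real.exp (-v / μ)

variable {μ x y : ℝ} {u g : ℝ → ℝ}

lemma boltzmannGibbs_pos (hμ : 0 < μ) (v : ℝ) : 0 < boltzmannGibbs μ v := by
  unfold boltzmannGibbs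
  positivity

lemma log_boltzmannGibbs (hμ : 0 < μ) (v : ℝ) :
    Real.log (boltzmannGibbs μ v) = -Real.log μ - v / μ := by
  rw [boltzmannGibbs, Real.log_mul (by positivity) (Real.exp_ne_zero _), Real.log_exp, one_div,
    Real.log_inv]
  ring

lemma boltzmannGibbs_eq_exp_mul (μ : ℝ) :
    boltzmannGibbs μ = fun v => μ⁻¹ * Real.exp (-μ⁻¹ * v) := by
  ext v
  rw [boltzmannGibbs, one_div, neg_div, div_eq_inv_mul, neg_mul]

lemma integrableOn_boltzmannGibbs (hμ : 0 < μ) : IntegrableOn (boltzmannGibbs μ) (Ioi 0) := by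
  rw [boltzmannGibbs_eq_exp_mul]
  exact (integrableOn_exp_mul_Ioi (neg_neg_of_pos (inv_pos.2 hμ)) 0).const_mul _

lemma integral_boltzmannGibbs (hμ : 0 < μ) : ∫ v in Ioi 0, boltzmannGibbs μ v = 1 := by
  rw [boltzmannGibbs_eq_exp_mul, integral_const_mul,
    integral_exp_mul_Ioi (neg_neg_of_pos (inv_pos.2 hμ)) 0]
  simp [hμ.ne']

lemma sub_le_mul_log_div (hx : 0 < x) (hy : 0 < y) : x - y ≤ x * Real.log (x / y) := by
  have hlog := mul_le_mul_of_nonneg_left (Real.one_sub_inv_le_log_of_pos (div_pos hx hy)) hx.le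
  calc x - y = x * (1 - (x / y)⁻¹) := by field_simp
    _ ≤ x * Real.log (x / y) := hlog

lemma abs_mul_log_div_le (hx : 0 < x) (hy : 0 < y) :
    |x * Real.log (x / y)| ≤ x * Real.log (x / y) + 2 * y := by
  rw [abs_le]
  constructor <;> linarith [sub_le_mul_log_div hx hy]

lemma relativeEntropy_nonneg (hu₀ : ∀ v, 0 < v → 0 < u v) (hg₀ : ∀ v, 0 < v → 0 < g v)
    (hu : IntegrableOn u (Ioi 0)) (hg : IntegrableOn g (Ioi 0))
    (hmass : ∫ v in Ioi 0, u v = ∫ v in Ioi 0, g v)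
    (hint : IntegrableOn (fun v => u v * Real.log (u v / g v)) (Ioi 0)) :
    0 ≤ relativeEntropy u g :=
  calc 0 = ∫ v in Ioi 0, (u v - g v) := by rw [integral_sub hu hg, hmass, sub_self]
    _ ≤ relativeEntropy u g := setIntegral_mono_on (hu.sub hg) hint measurableSet_Ioi
        fun v hv => sub_le_mul_log_div (hu₀ v hv) (hg₀ v hv)

lemma integral_abs_mul_log_div_le (hu₀ : ∀ v, 0 < v → 0 < u v) (hg₀ : ∀ v, 0 < v → 0 < g v)
    (hg : IntegrableOn g (Ioi 0))
    (hint : IntegrableOn (fun v => u v * Real.log (u v / g v)) (Ioi 0)) :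
    ∫ v in Ioi 0, |u v * Real.log (u v / g v)| ≤
      relativeEntropy u g + 2 * ∫ v in Ioi 0, g v := by
  rw [relativeEntropy, ← integral_const_mul, ← integral_add hint (hg.const_mul 2)]
  exact setIntegral_mono_on hint.abs (hint.add (hg.const_mul 2)) measurableSet_Ioi
    fun v hv => abs_mul_log_div_le (hu₀ v hv) (hg₀ v hv)

end RelativeEntropy

section FisherInformation

/-- The Fisher information `∫₀^∞ (∂_v f)² / f` at time `t`, localised to `(1, 2L)` by the weight
`cutoff L - cutoff 1`. -/
noncomputable def localFisher (f fv : ℝ → ℝ → ℝ) (L t : ℝ) : ℝ :=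
  ∫ v in Ioi 0, (cutoff L v - cutoff 1 v) * (f v t)⁻¹ * fv v t ^ 2

lemma cutoff_one_le_cutoff {L v : ℝ} (hL : 1 ≤ L) : cutoff 1 v ≤ cutoff L v := by
  rcases le_or_gt v 1 with hv | hv
  · rw [cutoff_eq_one (zero_lt_one.trans_le hL) (hv.trans hL)]
    exact cutoff_le_one
  · refine Real.smoothTransition.monotone (sub_le_sub_left ?_ 2)
    exact div_le_div_of_nonneg_left (by linarith) one_pos hL

lemma ae_exists_frequently_deriv_le {F F' : ℕ → ℝ → ℝ} {s t B : ℝ} (hst : s ≤ t)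
    (hF : ∀ n, ∀ r ∈ Icc s t, HasDerivAt (F n) (F' n r) r)
    (hF' : ∀ n, ∀ r ∈ Icc s t, 0 ≤ F' n r) (hB : ∀ n, F n t - F n s ≤ B) :
    ∀ᵐ r ∂volume.restrict (Ioc s t), ∃ C, ∃ᶠ n in atTop, F' n r ≤ C := by
  have hcont : ∀ n, ContinuousOn (F n) (Icc s t) := fun n r hr =>
    (hF n r hr).continuousAt.continuousWithinAt
  have hint : ∀ n, IntegrableOn (F' n) (Ioc s t) := fun n =>
    intervalIntegral.integrableOn_deriv_of_nonneg (hcont n)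
      (fun r hr => hF n r (Ioo_subset_Icc_self hr)) fun r hr => hF' n r (Ioo_subset_Icc_self hr)
  have hle : ∀ n, ∫⁻ r in Ioc s t, ENNReal.ofReal (F' n r) ≤ ENNReal.ofReal B := fun n => by
    rw [← ofReal_integral_eq_lintegral_ofReal (hint n) ((ae_restrict_mem measurableSet_Ioc).mono
      fun r hr => hF' n r (Ioc_subset_Icc_self hr)), ← intervalIntegral.integral_of_le hst,
      intervalIntegral.integral_eq_sub_of_hasDerivAt_of_le hst (hcont n)
        (fun r hr => hF n r (Ioo_subset_Icc_self hr))
        ((intervalIntegrable_iff_integrableOn_Ioc_of_le hst).2 (hint n))]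
    exact ENNReal.ofReal_le_ofReal (hB n)
  have hmeas : ∀ n, AEMeasurable (fun r => ENNReal.ofReal (F' n r))
    (volume.restrict (Ioc s t)) := fun n => (hint n).aemeasurable.ennreal_ofReal
  have hfin : ∫⁻ r in Ioc s t, liminf (fun n => ENNReal.ofReal (F' n r)) atTop ≠ ⊤ :=
    ne_top_of_le_ne_top ENNReal.ofReal_ne_top <| (lintegral_liminf_le' hmeas).trans <|
      (liminf_le_liminf (.of_forall hle)).trans_eq (liminf_const _)
  have hmeas_liminf : AEMeasurable (fun r => liminf (fun n => ENNReal.ofReal (F' n r)) atTop)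
      (volume.restrict (Ioc s t)) := by
    simp only [liminf_eq_iSup_iInf_of_nat]
    exact .iSup fun n => .biInf _ (to_countable _) fun i _ => hmeas i
  filter_upwards [ae_lt_top' hmeas_liminf hfin] with r hr
  obtain ⟨C, hC, -⟩ := ENNReal.lt_iff_exists_nnreal_btwn.1 hr
  refine ⟨C, (frequently_lt_of_liminf_lt (by isBoundedDefault) hC).mono fun n hn => ?_⟩
  exact (ENNReal.ofReal_le_ofReal_iff C.2).1 (by simpa using hn.le)

namespace IsBDYFlow

variable {μ : ℝ} {f ft fv fvv : ℝ → ℝ → ℝ} {L s t : ℝ}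

lemma mul_log_self_eq (h : IsBDYFlow μ f ft fv fvv) {v : ℝ} (hv : 0 < v) (ht : 0 ≤ t) :
    f v t * Real.log (f v t) =
      f v t * Real.log (f v t / boltzmannGibbs μ v) + (-Real.log μ + -μ⁻¹ * v) * f v t := by
  rw [Real.log_div (h.pos v t hv.le ht).ne' (boltzmannGibbs_pos h.mean_pos v).ne',
    log_boltzmannGibbs h.mean_pos]
  ring

lemma integrableOn_mul_log_self (h : IsBDYFlow μ f ft fv fvv) (ht : 0 ≤ t)
    (hint : IntegrableOn (fun v => f v t * Real.log (f v t / boltzmannGibbs μ v)) (Ioi 0)) :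
    IntegrableOn (fun v => f v t * Real.log (f v t)) (Ioi 0) :=
  (hint.add (h.integrableOn_affine_mul _ _ ht)).congr_fun
    (fun _ hv => (h.mul_log_self_eq hv ht).symm) measurableSet_Ioi

lemma integral_abs_mul_log_self_le (h : IsBDYFlow μ f ft fv fvv) (ht : 0 ≤ t)
    (hint : IntegrableOn (fun v => f v t * Real.log (f v t / boltzmannGibbs μ v)) (Ioi 0)) :
    ∫ v in Ioi 0, |f v t * Real.log (f v t)| ≤
      relativeEntropy (fun v => f v t) (boltzmannGibbs μ) + 3 + |Real.log μ| := by
  have hμ := h.mean_pos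
  have haff := h.integrableOn_affine_mul |Real.log μ| μ⁻¹ ht
  have hrel := integral_abs_mul_log_div_le (fun v hv => h.pos v t (le_of_lt hv) ht)
    (fun v _ => boltzmannGibbs_pos hμ v) (integrableOn_boltzmannGibbs hμ) hint
  rw [integral_boltzmannGibbs hμ] at hrel
  calc ∫ v in Ioi 0, |f v t * Real.log (f v t)|
      ≤ ∫ v in Ioi 0, (|f v t * Real.log (f v t / boltzmannGibbs μ v)| +
          (|Real.log μ| + μ⁻¹ * v) * f v t) := by
        refine setIntegral_mono_on (h.integrableOn_mul_log_self ht hint).abs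
          (hint.abs.add haff) measurableSet_Ioi fun v hv => ?_
        have hv₀ : 0 < v := hv
        have hf := h.pos v t hv₀.le ht
        rw [h.mul_log_self_eq hv₀ ht]
        refine (abs_add_le _ _).trans (add_le_add_right ?_ _)
        rw [abs_mul, abs_of_pos hf]
        refine mul_le_mul_of_nonneg_right ((abs_add_le _ _).trans_eq ?_) hf.le
        rw [abs_neg, neg_mul, abs_neg, abs_of_pos (mul_pos (inv_pos.2 hμ) hv₀)]
    _ ≤ relativeEntropy (fun v => f v t) (boltzmannGibbs μ) + 3 + |Real.log μ| := by
        rw [integral_add hint.abs haff, h.integral_affine_mul _ _ ht, inv_mul_cancel₀ hμ.ne']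
        linarith

lemma exists_hasDerivAt_localEntropy (h : IsBDYFlow μ f ft fv fvv) : ∃ E, 0 ≤ E ∧
    ∀ L t, 1 ≤ L → 0 < t → IntegrableOn (fun v => f v t * Real.log (f v t)) (Ioi 0) →
      ∃ P, |P| ≤ E * (1 + f 0 t) * ∫ v in Ioi 0, |f v t * Real.log (f v t)| ∧
        HasDerivAt (fun s => ∫ v in Ioi 0, (cutoff L v - cutoff 1 v) * (f v s * Real.log (f v s)))
          (P - localFisher f fv L t) t := by
  obtain ⟨E, hE⟩ := exists_hasTwoDerivs_cutoff
  obtain ⟨θ₁, θ₂, hθ, hθE⟩ := hE 1 le_rfl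
  have hE₀ : 0 ≤ E := by simpa using (abs_nonneg _).trans (hθE 0).1
  refine ⟨2 * E, by positivity, fun L t hL ht hint => ?_⟩
  have hL₀ : 0 < L := by linarith
  obtain ⟨η₁, η₂, hη, hηE⟩ := hE L hL
  have hbd : ∀ {p q}, |p| ≤ E / L → |q| ≤ E / 1 → |p - q| ≤ 2 * E := fun {p q} hp hq => by
    linarith [abs_sub p q, div_le_self hE₀ hL]
  refine ⟨_, ?_, h.isDriftHeatSolutionOn.hasDerivAt_setIntegral_renormalized
    isOpen_Ioi (h.continuousOn_f_zero.mono Ioi_subset_Ici_self) (hη.sub hθ) one_pos (R := 2 * L)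
    (fun v hv => by rw [cutoff_eq_one hL₀ (hv.trans hL), cutoff_eq_one one_pos hv, sub_self])
    (fun v hv => by
      rw [cutoff_eq_zero hL₀ hv, cutoff_eq_zero one_pos (by linarith), sub_self])
    (Y := Ioi 0) (fun v hv t ht => h.pos v t (le_of_lt hv) (le_of_lt ht))
    (fun y hy => Real.hasDerivAt_mul_log (ne_of_gt hy))
    (fun y hy => (Real.hasDerivAt_log (ne_of_gt hy)).add_const 1)
    (continuousOn_inv₀.mono fun y hy => ne_of_gt hy) ht⟩
  rw [← integral_const_mul, ← Real.norm_eq_abs]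
  refine norm_integral_le_of_norm_le (hint.abs.const_mul _) (.of_forall fun v => ?_)
  rw [norm_mul, Real.norm_eq_abs, Real.norm_eq_abs]
  refine mul_le_mul_of_nonneg_right ?_ (abs_nonneg _)
  have ha := h.pos 0 t le_rfl ht.le
  calc _ ≤ |η₂ v - θ₂ v| + |f 0 t * (η₁ v - θ₁ v)| := abs_sub _ _
    _ ≤ 2 * E + f 0 t * (2 * E) := by
      rw [abs_mul, abs_of_pos ha]
      gcongr
      · exact hbd (hηE v).2 (hθE v).2
      · exact hbd (hηE v).1 (hθE v).1
    _ = 2 * E * (1 + f 0 t) := by ring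

lemma integrableOn_localFisher (h : IsBDYFlow μ f ft fv fvv) (hL : 1 ≤ L) (ht : 0 ≤ t) :
    IntegrableOn (fun v => (cutoff L v - cutoff 1 v) * (f v t)⁻¹ * fv v t ^ 2) (Ioi 0) := by
  have hweight : Continuous fun v => cutoff L v - cutoff 1 v :=
    (hasTwoDerivs_cutoff L).continuous.sub (hasTwoDerivs_cutoff 1).continuous
  have hcont : ContinuousOn (fun v => (cutoff L v - cutoff 1 v) * (f v t)⁻¹ * fv v t ^ 2) (Ici 0) :=
    (hweight.continuousOn.mul ((h.continuousOn_v ht).inv₀ fun v hv => (h.pos v t hv ht).ne')).mul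
      ((h.continuousOn_fv ht).pow 2)
  refine (hcont.mono (Icc_subset_Ici_self (a := 2 * L))).integrableOn_Icc.of_forall_sdiff_eq_zero
    measurableSet_Ioi fun v hv => ?_
  have hLv : 2 * L ≤ v := le_of_lt (not_le.1 fun hle => hv.2 ⟨le_of_lt hv.1, hle⟩)
  rw [cutoff_eq_zero (by linarith) hLv, cutoff_eq_zero one_pos (by linarith), sub_zero, zero_mul,
    zero_mul]

lemma localFisher_integrand_nonneg (h : IsBDYFlow μ f ft fv fvv) (hL : 1 ≤ L) (ht : 0 ≤ t) {v : ℝ}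
    (hv : 0 < v) : 0 ≤ (cutoff L v - cutoff 1 v) * (f v t)⁻¹ * fv v t ^ 2 :=
  mul_nonneg (mul_nonneg (sub_nonneg.2 (cutoff_one_le_cutoff hL))
    (inv_nonneg.2 (h.pos v t hv.le ht).le)) (sq_nonneg _)

lemma localFisher_nonneg (h : IsBDYFlow μ f ft fv fvv) (hL : 1 ≤ L) (ht : 0 ≤ t) :
    0 ≤ localFisher f fv L t :=
  setIntegral_nonneg measurableSet_Ioi fun _ hv => h.localFisher_integrand_nonneg hL ht hv

lemma integral_sq_div_le_localFisher (h : IsBDYFlow μ f ft fv fvv) (hL : 2 ≤ L) (ht : 0 ≤ t) :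
    ∫ v in (2 : ℝ)..L, fv v t ^ 2 / f v t ≤ localFisher f fv L t := by
  have hL₁ : 1 ≤ L := by linarith
  have hsub : Ioc 2 L ⊆ Ioi 0 := fun v hv => two_pos.trans hv.1
  rw [intervalIntegral.integral_of_le hL]
  calc ∫ v in Ioc 2 L, fv v t ^ 2 / f v t
      = ∫ v in Ioc 2 L, (cutoff L v - cutoff 1 v) * (f v t)⁻¹ * fv v t ^ 2 := by
        refine setIntegral_congr_fun measurableSet_Ioc fun v hv => ?_
        rw [cutoff_eq_one (by linarith) hv.2, cutoff_eq_zero one_pos (by linarith [hv.1])]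
        ring
    _ ≤ localFisher f fv L t :=
        setIntegral_mono_set (h.integrableOn_localFisher hL₁ ht)
          ((ae_restrict_mem measurableSet_Ioi).mono fun v hv =>
            h.localFisher_integrand_nonneg hL₁ ht hv) hsub.eventuallyLE

/-- Integrated in time, the local entropy identity bounds the local Fisher information uniformly
in the localisation. -/
lemma ae_exists_frequently_localFisher_le (h : IsBDYFlow μ f ft fv fvv) (hs : 0 < s)
    (hst : s ≤ t) {B : ℝ}
    (hint : ∀ r ∈ Icc s t, IntegrableOn (fun v => f v r * Real.log (f v r)) (Ioi 0))
    (hB : ∀ r ∈ Icc s t, ∫ v in Ioi 0, |f v r * Real.log (f v r)| ≤ B) :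
    ∀ᵐ r ∂volume.restrict (Ioc s t), ∃ C, ∃ᶠ n : ℕ in atTop, localFisher f fv (n + 1) r ≤ C := by
  obtain ⟨E, hE₀, hE⟩ := h.exists_hasDerivAt_localEntropy
  obtain ⟨A, hA⟩ := isCompact_Icc.exists_bound_of_continuousOn
    (h.continuousOn_f_zero.mono (Icc_subset_Ici_self.trans (Ici_subset_Ici.2 hs.le)))
  have hone : ∀ n : ℕ, (1 : ℝ) ≤ n + 1 := fun n => by linarith [n.cast_nonneg (α := ℝ)]
  choose! P hP hderiv using fun (n : ℕ) r (hr : r ∈ Icc s t) =>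
    hE (n + 1) r (hone n) (hs.trans_le hr.1) (hint r hr)
  set G : ℕ → ℝ → ℝ := fun n r =>
    ∫ v in Ioi 0, (cutoff (n + 1) v - cutoff 1 v) * (f v r * Real.log (f v r))
  set N := E * (1 + A) * B
  have hPN : ∀ n, ∀ r ∈ Icc s t, |P n r| ≤ N := fun n r hr => by
    have hf := h.pos 0 r le_rfl (hs.le.trans hr.1)
    have hfA := (le_abs_self _).trans (hA r hr)
    have hA₀ : 0 ≤ A := hf.le.trans hfA
    calc |P n r| ≤ E * (1 + f 0 r) * ∫ v in Ioi 0, |f v r * Real.log (f v r)| := hP n r hr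
      _ ≤ E * (1 + A) * B := by
        gcongr
        exact hB r hr
  have hG : ∀ n, ∀ r ∈ Icc s t, |G n r| ≤ B := fun n r hr => by
    rw [← Real.norm_eq_abs]
    refine (norm_integral_le_of_norm_le (hint r hr).abs (.of_forall fun v => ?_)).trans (hB r hr)
    rw [norm_mul]
    refine mul_le_of_le_one_left (norm_nonneg _) (abs_le.2 ?_)
    constructor <;> linarith [cutoff_nonneg (L := n + 1) (v := v), cutoff_nonneg (L := 1) (v := v),
      cutoff_le_one (L := n + 1) (v := v), cutoff_le_one (L := 1) (v := v)]
  have hae := ae_exists_frequently_deriv_le (F := fun n r => N * r - G n r)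
    (F' := fun n r => N * 1 - (P n r - localFisher f fv (n + 1) r)) (B := N * (t - s) + 2 * B) hst
    (fun n r hr => ((hasDerivAt_id r).const_mul N).sub (hderiv n r hr)) (fun n r hr => ?_)
    fun n => ?_
  · filter_upwards [hae, ae_restrict_mem measurableSet_Ioc] with r ⟨C, hC⟩ hr
    refine ⟨C, hC.mono fun n hn => ?_⟩
    linarith [(abs_le.1 (hPN n r (Ioc_subset_Icc_self hr))).2]
  · linarith [(abs_le.1 (hPN n r hr)).2, h.localFisher_nonneg (hone n) (hs.le.trans hr.1)]
  · have hGt := abs_le.1 (hG n t (right_mem_Icc.2 hst))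
    have hGs := abs_le.1 (hG n s (left_mem_Icc.2 hst))
    linarith

lemma continuousOn_sq_div (h : IsBDYFlow μ f ft fv fvv) (ht : 0 ≤ t) :
    ContinuousOn (fun v => fv v t ^ 2 / f v t) (Ici 0) :=
  ((h.continuousOn_fv ht).pow 2).div (h.continuousOn_v ht) fun v hv => (h.pos v t hv ht).ne'

lemma continuousOn_dissipation (h : IsBDYFlow μ f ft fv fvv) (ht : 0 ≤ t) :
    ContinuousOn (fun v => (fv v t + f 0 t * f v t) ^ 2 / f v t) (Ici 0) :=
  (((h.continuousOn_fv ht).add ((h.continuousOn_v ht).const_mul _)).pow 2).div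
    (h.continuousOn_v ht) fun v hv => (h.pos v t hv ht).ne'

lemma integrableOn_sq_div_of_localFisher (h : IsBDYFlow μ f ft fv fvv) (ht : 0 ≤ t) {C : ℝ}
    (hC : ∃ᶠ n : ℕ in atTop, localFisher f fv (n + 1) t ≤ C) :
    IntegrableOn (fun v => fv v t ^ 2 / f v t) (Ioi 0) := by
  have hcont := h.continuousOn_sq_div ht
  have : (atTop ⊓ 𝓟 {n : ℕ | localFisher f fv (n + 1) t ≤ C}).NeBot :=
    frequently_mem_iff_neBot.1 hC
  have hlim : Tendsto (fun n : ℕ => (n + 1 : ℝ)) (atTop ⊓ 𝓟 {n | localFisher f fv (n + 1) t ≤ C})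
      atTop := (tendsto_natCast_atTop_atTop.atTop_add tendsto_const_nhds).mono_left inf_le_left
  rw [← Ioc_union_Ioi_eq_Ioi two_pos.le]
  refine ((hcont.mono Icc_subset_Ici_self).integrableOn_Icc.mono_set Ioc_subset_Icc_self).union
    (integrableOn_Ioi_of_intervalIntegral_norm_bounded C 2 (fun n => ?_) hlim ?_)
  · refine (hcont.mono fun v hv => ?_).integrableOn_Icc.mono_set Ioc_subset_Icc_self
    exact two_pos.le.trans hv.1
  · filter_upwards [hlim.eventually_ge_atTop 2, mem_inf_of_right (mem_principal_self _)]
      with n hn hnC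
    refine le_trans (le_of_eq ?_) ((h.integral_sq_div_le_localFisher hn ht).trans hnC)
    refine intervalIntegral.integral_congr fun v hv => ?_
    rw [uIcc_of_le hn] at hv
    have hf := h.pos v t (two_pos.le.trans hv.1) ht
    exact Real.norm_of_nonneg (by positivity)

lemma integrableOn_dissipation (h : IsBDYFlow μ f ft fv fvv) (ht : 0 ≤ t)
    (hint : IntegrableOn (fun v => fv v t ^ 2 / f v t) (Ioi 0)) :
    IntegrableOn (fun v => (fv v t + f 0 t * f v t) ^ 2 / f v t) (Ioi 0) := by
  refine ((hint.const_mul 2).add ((h.integrableOn t ht).const_mul (2 * f 0 t ^ 2))).mono'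
    (((h.continuousOn_dissipation ht).mono Ioi_subset_Ici_self).aestronglyMeasurable
      measurableSet_Ioi) ?_
  filter_upwards [ae_restrict_mem measurableSet_Ioi] with v hv
  have hf := h.pos v t (le_of_lt hv) ht
  rw [Real.norm_of_nonneg (by positivity)]
  calc (fv v t + f 0 t * f v t) ^ 2 / f v t
      ≤ 2 * (fv v t ^ 2 + (f 0 t * f v t) ^ 2) / f v t := by
        gcongr
        exact add_sq_le
    _ = 2 * (fv v t ^ 2 / f v t) + 2 * f 0 t ^ 2 * f v t := by field_simp

end IsBDYFlow

end FisherInformation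

section TimeSelection

/-- The dissipation `∫₀^∞ (u' + u(0) u)² / u` of the relative entropy at a density `u` with
derivative `u'`. -/
noncomputable def entropyDissipation (u u' : ℝ → ℝ) : ℝ :=
  ∫ v in Ioi 0, (u' v + u 0 * u v) ^ 2 / u v

/-- A solution of the BDY equation whose entropy relative to the Boltzmann–Gibbs density is finite
and satisfies the entropy dissipation identity. -/
structure IsDissipativeBDYFlow (μ : ℝ) (f ft fv fvv : ℝ → ℝ → ℝ) : Prop
    extends IsBDYFlow μ f ft fv fvv where
  integrableOn_relativeEntropy : ∀ t : ℝ, 0 ≤ t →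
    IntegrableOn (fun v => f v t * Real.log (f v t / boltzmannGibbs μ v)) (Ioi 0)
  hasDerivAt_relativeEntropy : ∀ t : ℝ, 0 ≤ t →
    HasDerivAt (fun s => relativeEntropy (fun v => f v s) (boltzmannGibbs μ))
      (-entropyDissipation (fun v => f v t) fun v => fv v t) t

namespace IsDissipativeBDYFlow

variable {μ : ℝ} {f ft fv fvv : ℝ → ℝ → ℝ} {s t ε₁ ε₂ : ℝ}

lemma relativeEntropy_nonneg (h : IsDissipativeBDYFlow μ f ft fv fvv) (ht : 0 ≤ t) :
    0 ≤ relativeEntropy (fun v => f v t) (boltzmannGibbs μ) :=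
  _root_.relativeEntropy_nonneg (fun v hv => h.pos v t (le_of_lt hv) ht)
    (fun v _ => boltzmannGibbs_pos h.mean_pos v) (h.integrableOn t ht)
    (integrableOn_boltzmannGibbs h.mean_pos)
    ((h.mass t ht).trans (integral_boltzmannGibbs h.mean_pos).symm)
    (h.integrableOn_relativeEntropy t ht)

lemma entropyDissipation_nonneg (h : IsDissipativeBDYFlow μ f ft fv fvv) (ht : 0 ≤ t) :
    0 ≤ entropyDissipation (fun v => f v t) fun v => fv v t :=
  setIntegral_nonneg measurableSet_Ioi fun v hv =>
    div_nonneg (sq_nonneg _) (h.pos v t (le_of_lt hv) ht).le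

lemma ae_integrableOn_dissipation (h : IsDissipativeBDYFlow μ f ft fv fvv) (hs : 0 < s)
    (hst : s ≤ t) : ∀ᵐ r ∂volume.restrict (Ioc s t),
      IntegrableOn (fun v => (fv v r + f 0 r * f v r) ^ 2 / f v r) (Ioi 0) := by
  have hs₀ : ∀ r ∈ Icc s t, 0 ≤ r := fun r hr => hs.le.trans hr.1
  have hHcont : ContinuousOn (fun r => relativeEntropy (fun v => f v r) (boltzmannGibbs μ))
      (Icc s t) := fun r hr =>
    (h.hasDerivAt_relativeEntropy r (hs₀ r hr)).continuousAt.continuousWithinAt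
  obtain ⟨B, hB⟩ := isCompact_Icc.exists_bound_of_continuousOn hHcont
  filter_upwards [h.ae_exists_frequently_localFisher_le hs hst (B := B + 3 + |Real.log μ|)
    (fun r hr => h.integrableOn_mul_log_self (hs₀ r hr)
      (h.integrableOn_relativeEntropy r (hs₀ r hr)))
    (fun r hr => (h.integral_abs_mul_log_self_le (hs₀ r hr)
      (h.integrableOn_relativeEntropy r (hs₀ r hr))).trans
        (by linarith [(le_abs_self _).trans (hB r hr)])),
    ae_restrict_mem measurableSet_Ioc] with r ⟨C, hC⟩ hr
  have hr₀ := hs₀ r (Ioc_subset_Icc_self hr)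
  exact h.integrableOn_dissipation hr₀ (h.integrableOn_sq_div_of_localFisher hr₀ hC)

lemma intervalIntegrable_entropyDissipation (h : IsDissipativeBDYFlow μ f ft fv fvv) (hs : 0 ≤ s)
    (hst : s ≤ t) :
    IntervalIntegrable (fun r => entropyDissipation (fun v => f v r) fun v => fv v r)
      volume s t := by
  have hs₀ : ∀ r ∈ Icc s t, 0 ≤ r := fun r hr => hs.trans hr.1
  rw [intervalIntegrable_iff_integrableOn_Ioc_of_le hst]
  refine intervalIntegral.integrableOn_deriv_of_nonneg
    (g := fun r => -relativeEntropy (fun v => f v r) (boltzmannGibbs μ)) (fun r hr => ?_)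
    (fun r hr => ?_) fun r hr => h.entropyDissipation_nonneg (hs₀ r (Ioo_subset_Icc_self hr))
  · exact (h.hasDerivAt_relativeEntropy r (hs₀ r hr)).neg.continuousAt.continuousWithinAt
  · exact (h.hasDerivAt_relativeEntropy r (hs₀ r (Ioo_subset_Icc_self hr))).neg.congr_deriv
      (neg_neg _)

lemma integral_entropyDissipation_le (h : IsDissipativeBDYFlow μ f ft fv fvv) (hs : 0 ≤ s)
    (hst : s ≤ t) : ∫ r in s..t, entropyDissipation (fun v => f v r) (fun v => fv v r) ≤
      relativeEntropy (fun v => f v s) (boltzmannGibbs μ) := by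
  have hftc := intervalIntegral.integral_eq_sub_of_hasDerivAt (fun r hr =>
    h.hasDerivAt_relativeEntropy r (hs.trans (uIcc_of_le hst ▸ hr).1))
    (h.intervalIntegrable_entropyDissipation hs hst).neg
  rw [intervalIntegral.integral_neg] at hftc
  linarith [h.relativeEntropy_nonneg (hs.trans hst)]

/-- Were there no such time, `f 0 t + c * D t ≥ 1 / μ + ε₂` would hold for almost all large times,
where `D` is the dissipation and `c = (1 / μ + ε₂) / ε₁`. But `D` has finite integral, and the time
averages of `f 0` do not exceed `1 / μ` in the limit. -/
lemma exists_entropyDissipation_le (h : IsDissipativeBDYFlow μ f ft fv fvv) (hε₁ : 0 < ε₁)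
    (hε₂ : 0 < ε₂) (hs : 0 < s) : ∃ t, s ≤ t ∧
      IntegrableOn (fun v => (fv v t + f 0 t * f v t) ^ 2 / f v t) (Ioi 0) ∧
      entropyDissipation (fun v => f v t) (fun v => fv v t) ≤ ε₁ ∧ f 0 t ≤ 1 / μ + ε₂ := by
  by_contra! hnone
  set D : ℝ → ℝ := fun t => entropyDissipation (fun v => f v t) fun v => fv v t
  set H : ℝ := relativeEntropy (fun v => f v s) (boltzmannGibbs μ)
  set c := (1 / μ + ε₂) / ε₁ with hc
  have hμ := h.mean_pos
  have hc₀ : 0 < c := by positivity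
  have hlarge : Tendsto (fun R => ε₂ / 2 * R) atTop atTop :=
    tendsto_id.const_mul_atTop (by positivity)
  obtain ⟨R, hRavg, hRlarge, hR⟩ := ((h.eventually_integral_f_zero_le (κ := 1 / μ + ε₂ / 2)
    (by linarith) hs).and ((hlarge.eventually_gt_atTop (c * H)).and (eventually_ge_atTop 0))).exists
  have hsR : s ≤ s + R := le_add_of_nonneg_right hR
  have hfint : IntervalIntegrable (f 0) volume s (s + R) :=
    (h.continuousOn_f_zero.mono
      (Icc_subset_Ici_self.trans (Ici_subset_Ici.2 hs.le))).intervalIntegrable_of_Icc hsR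
  have hDint := (h.intervalIntegrable_entropyDissipation hs.le hsR).const_mul c
  have hae : ∀ᵐ t ∂volume.restrict (Ioc s (s + R)), 1 / μ + ε₂ ≤ f 0 t + c * D t := by
    filter_upwards [h.ae_integrableOn_dissipation hs hsR, ae_restrict_mem measurableSet_Ioc]
      with t hint ht
    have ht₀ : 0 ≤ t := hs.le.trans ht.1.le
    rcases le_or_gt (D t) ε₁ with hD | hD
    · linarith [hnone t ht.1.le hint hD, mul_nonneg hc₀.le (h.entropyDissipation_nonneg ht₀)]
    · have hcD : c * ε₁ ≤ c * D t := by gcongr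
      rw [hc, div_mul_cancel₀ _ hε₁.ne'] at hcD
      linarith [h.pos 0 t le_rfl ht₀]
  have hlower : (1 / μ + ε₂) * R ≤ ∫ t in s..s + R, (f 0 t + c * D t) := by
    calc (1 / μ + ε₂) * R = ∫ _ in s..s + R, (1 / μ + ε₂) := by
          rw [intervalIntegral.integral_const, smul_eq_mul]
          ring
      _ ≤ ∫ t in s..s + R, (f 0 t + c * D t) :=
        intervalIntegral.integral_mono_ae_restrict hsR intervalIntegrable_const (hfint.add hDint)
          (by rwa [Measure.restrict_congr_set Ioc_ae_eq_Icc] at hae)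
  rw [intervalIntegral.integral_add hfint hDint, intervalIntegral.integral_const_mul] at hlower
  have := mul_le_mul_of_nonneg_left (h.integral_entropyDissipation_le hs.le hsR) hc₀.le
  linarith

end IsDissipativeBDYFlow

end TimeSelection

section Profile

lemma abs_div_two_le_add_sq_mul {y ε : ℝ} (hε : 0 < ε) : |y / 2| ≤ ε + y ^ 2 * (1 / ε) := by
  rw [abs_div, abs_two, ← sq_abs y, ← sub_nonneg]
  have hsq : ε + |y| ^ 2 * (1 / ε) - |y| / 2 = ((ε - |y|) ^ 2 + 3 / 2 * ε * |y|) / ε := by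
    field_simp
    ring
  rw [hsq]
  positivity

namespace IsBDYFlow

variable {μ : ℝ} {f ft fv fvv : ℝ → ℝ → ℝ} {t v R ε : ℝ}

lemma hasDerivAt_sqrt_mul_exp (h : IsBDYFlow μ f ft fv fvv) (ht : 0 ≤ t) (hv : 0 ≤ v) (a : ℝ) :
    HasDerivAt (fun w => √(f w t) * Real.exp (a * w / 2))
      (Real.exp (a * v / 2) * ((fv v t + a * f v t) / √(f v t) / 2)) v := by
  have hf := h.pos v t hv ht
  have hexp : HasDerivAt (fun w => Real.exp (a * w / 2)) (Real.exp (a * v / 2) * (a * 1 / 2)) v :=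
    (((hasDerivAt_id v).const_mul a).div_const 2).exp
  refine (((h.hasDerivAt_v v t hv ht).sqrt hf.ne').mul hexp).congr_deriv ?_
  field_simp
  rw [Real.sq_sqrt hf.le]
  ring

lemma integral_dissipation_le (h : IsBDYFlow μ f ft fv fvv) (ht : 0 ≤ t) (hv : 0 ≤ v)
    (hint : IntegrableOn (fun w => (fv w t + f 0 t * f w t) ^ 2 / f w t) (Ioi 0)) :
    ∫ w in (0 : ℝ)..v, (fv w t + f 0 t * f w t) ^ 2 / f w t ≤
      entropyDissipation (fun w => f w t) fun w => fv w t := by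
  rw [intervalIntegral.integral_of_le hv]
  exact setIntegral_mono_set hint ((ae_restrict_mem measurableSet_Ioi).mono fun w hw =>
    div_nonneg (sq_nonneg _) (h.pos w t (le_of_lt hw) ht).le) Ioc_subset_Ioi_self.eventuallyLE

/-- The factor `e^{a v / 2}` with `a = f 0 t` turns `√f` into a function whose derivative is
controlled by the square root of the dissipation density. -/
lemma abs_sqrt_mul_exp_sub_le (h : IsBDYFlow μ f ft fv fvv) (ht : 0 ≤ t) (hv : 0 ≤ v)
    (hε : 0 < ε) (hint : IntegrableOn (fun w => (fv w t + f 0 t * f w t) ^ 2 / f w t) (Ioi 0))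
    (hD : entropyDissipation (fun w => f w t) (fun w => fv w t) ≤ ε ^ 2) :
    |√(f v t) * Real.exp (f 0 t * v / 2) - √(f 0 t)| ≤
      Real.exp (f 0 t * v / 2) * (ε * (v + 1)) := by
  set a := f 0 t with ha
  have ha₀ : 0 < a := h.pos 0 t le_rfl ht
  set J : ℝ → ℝ := fun w => (fv w t + a * f w t) ^ 2 / f w t
  set G' : ℝ → ℝ := fun w => Real.exp (a * w / 2) * ((fv w t + a * f w t) / √(f w t) / 2)
  have hG'cont : ContinuousOn G' (Icc 0 v) := by
    have hf := (h.continuousOn_v ht).mono (Icc_subset_Ici_self : Icc 0 v ⊆ Ici 0)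
    have hfv := (h.continuousOn_fv ht).mono (Icc_subset_Ici_self : Icc 0 v ⊆ Ici 0)
    exact (by fun_prop : Continuous fun w => Real.exp (a * w / 2)).continuousOn.mul
      (((hfv.add (hf.const_mul a)).div hf.sqrt
        fun w hw => (Real.sqrt_pos.2 (h.pos w t hw.1 ht)).ne').div_const 2)
  have hftc := intervalIntegral.integral_eq_sub_of_hasDerivAt (fun w hw =>
    h.hasDerivAt_sqrt_mul_exp ht (uIcc_of_le hv ▸ hw).1 a) (hG'cont.intervalIntegrable_of_Icc hv)
  have hJ : IntervalIntegrable J volume 0 v :=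
    ((h.continuousOn_dissipation ht).mono Icc_subset_Ici_self).intervalIntegrable_of_Icc hv
  have hbound : ∀ w ∈ Ioc 0 v, ‖G' w‖ ≤ Real.exp (a * v / 2) * (ε + J w * (1 / ε)) := by
    intro w hw
    have hJw : J w = ((fv w t + a * f w t) / √(f w t)) ^ 2 := by
      rw [div_pow, Real.sq_sqrt (h.pos w t hw.1.le ht).le]
    rw [norm_mul, Real.norm_of_nonneg (Real.exp_pos _).le, hJw]
    gcongr
    · exact hw.2
    · exact abs_div_two_le_add_sq_mul hε
  have hle := intervalIntegral.norm_integral_le_of_norm_le hv (.of_forall hbound)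
    ((intervalIntegrable_const.add (hJ.mul_const _)).const_mul _)
  rw [hftc, ← ha, mul_zero, zero_div, Real.exp_zero, mul_one, Real.norm_eq_abs,
    intervalIntegral.integral_const_mul, intervalIntegral.integral_add intervalIntegrable_const
    (hJ.mul_const _), intervalIntegral.integral_mul_const, intervalIntegral.integral_const,
    smul_eq_mul, sub_zero] at hle
  have hJε : (∫ w in (0 : ℝ)..v, J w) * (1 / ε) ≤ ε := by
    rw [mul_one_div, div_le_iff₀ hε, ← sq]
    exact (h.integral_dissipation_le ht hv hint).trans hD
  exact hle.trans (mul_le_mul_of_nonneg_left (by linarith) (Real.exp_pos _).le)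

lemma abs_sqrt_sub_le (h : IsBDYFlow μ f ft fv fvv) (ht : 0 ≤ t) (hv : 0 ≤ v) (hε : 0 < ε)
    (hint : IntegrableOn (fun w => (fv w t + f 0 t * f w t) ^ 2 / f w t) (Ioi 0))
    (hD : entropyDissipation (fun w => f w t) (fun w => fv w t) ≤ ε ^ 2) :
    |√(f v t) - √(f 0 t) * Real.exp (-f 0 t * v / 2)| ≤ ε * (v + 1) := by
  have hexp : Real.exp (f 0 t * v / 2) * Real.exp (-f 0 t * v / 2) = 1 := by
    rw [← Real.exp_add, ← Real.exp_zero]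
    ring_nf
  have hfactor : √(f v t) * Real.exp (f 0 t * v / 2) - √(f 0 t) =
      Real.exp (f 0 t * v / 2) * (√(f v t) - √(f 0 t) * Real.exp (-f 0 t * v / 2)) := by
    linear_combination √(f 0 t) * hexp
  have hle := h.abs_sqrt_mul_exp_sub_le ht hv hε hint hD
  rw [hfactor, abs_mul, abs_of_pos (Real.exp_pos _)] at hle
  exact le_of_mul_le_mul_left hle (Real.exp_pos _)

lemma sub_mean_le_integral (h : IsBDYFlow μ f ft fv fvv) (ht : 0 ≤ t) (hR : 0 ≤ R) :
    R - μ ≤ ∫ v in (0 : ℝ)..R, (R - v) * f v t := by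
  have hint : IntegrableOn (fun v => (R - v) * f v t) (Ioi 0) := by
    simpa [sub_eq_add_neg] using h.integrableOn_affine_mul R (-1) ht
  have htotal : ∫ v in Ioi 0, (R - v) * f v t = R - μ := by
    simpa [sub_eq_add_neg] using h.integral_affine_mul R (-1) ht
  have htail : ∫ v in Ioi R, (R - v) * f v t ≤ 0 :=
    setIntegral_nonpos measurableSet_Ioi fun v hv => mul_nonpos_of_nonpos_of_nonneg
      (sub_nonpos.2 (le_of_lt hv)) (h.pos v t (hR.trans (le_of_lt hv)) ht).le
  linarith [intervalIntegral.integral_interval_add_Ioi hint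
    (hint.mono_set (Ioi_subset_Ioi hR))]

end IsBDYFlow

end Profile

section Limit

lemma integral_sub_mul_exp {α : ℝ} (hα : α ≠ 0) (R : ℝ) :
    ∫ v in (0 : ℝ)..R, (R - v) * (α * Real.exp (-α * v)) = R - (1 - Real.exp (-α * R)) / α := by
  have hderiv : ∀ v ∈ uIcc 0 R,
      HasDerivAt (fun v => (v - R) * Real.exp (-α * v) + Real.exp (-α * v) / α)
        ((R - v) * (α * Real.exp (-α * v))) v := fun v _ => by
    have hexp : HasDerivAt (fun v => Real.exp (-α * v)) (Real.exp (-α * v) * (-α * 1)) v :=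
      ((hasDerivAt_id v).const_mul (-α)).exp
    refine ((((hasDerivAt_id v).sub_const R).mul hexp).add (hexp.div_const α)).congr_deriv ?_
    simp only [id]
    field_simp
    ring
  rw [intervalIntegral.integral_eq_sub_of_hasDerivAt hderiv
    (Continuous.intervalIntegrable (by fun_prop) _ _), mul_zero, Real.exp_zero]
  ring

/-- The right-hand side is `R - 1 / α + o(1)` as `R → ∞`, so that `1 / α ≤ μ`. -/
lemma one_div_le_of_forall_sub_le_integral {μ α : ℝ} (hμ : 0 < μ) (hα : 0 ≤ α)
    (h : ∀ R, 0 < R → R - μ ≤ ∫ v in (0 : ℝ)..R, (R - v) * (α * Real.exp (-α * v))) :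
    1 / μ ≤ α := by
  have hα₀ : 0 < α := hα.lt_of_ne fun hzero => by
    have := h (μ + 1) (by linarith)
    simp only [← hzero, zero_mul, mul_zero, intervalIntegral.integral_zero] at this
    linarith
  have hle : ∀ R, 0 < R → 1 - α * μ ≤ Real.exp (-α * R) := fun R hR => by
    have hR := h R hR
    rw [integral_sub_mul_exp hα₀.ne', sub_le_sub_iff_left, div_le_iff₀ hα₀] at hR
    linarith
  have hlim : Tendsto (fun R => Real.exp (-α * R)) atTop (𝓝 0) :=
    Real.tendsto_exp_atBot.comp (tendsto_id.const_mul_atTop_of_neg (neg_neg_of_pos hα₀))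
  rw [div_le_iff₀ hμ]
  linarith [ge_of_tendsto hlim ((eventually_gt_atTop 0).mono hle)]

namespace IsBDYFlow

variable {μ : ℝ} {f ft fv fvv : ℝ → ℝ → ℝ} {τ ε : ℕ → ℝ} {α v : ℝ}

lemma tendsto_mul_exp_of_dissipation_le (h : IsBDYFlow μ f ft fv fvv) (hτ : ∀ k, 0 ≤ τ k)
    (hε₀ : ∀ k, 0 < ε k) (hε : Tendsto ε atTop (𝓝 0))
    (hint : ∀ k, IntegrableOn
      (fun v => (fv v (τ k) + f 0 (τ k) * f v (τ k)) ^ 2 / f v (τ k)) (Ioi 0))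
    (hD : ∀ k, entropyDissipation (fun v => f v (τ k)) (fun v => fv v (τ k)) ≤ ε k ^ 2)
    (hα : Tendsto (fun k => f 0 (τ k)) atTop (𝓝 α)) (hv : 0 ≤ v) :
    Tendsto (fun k => f v (τ k)) atTop (𝓝 (α * Real.exp (-α * v))) := by
  have hα₀ : 0 ≤ α := ge_of_tendsto' hα fun k => (h.pos 0 _ le_rfl (hτ k)).le
  have hdiff : Tendsto (fun k => √(f v (τ k)) - √(f 0 (τ k)) * Real.exp (-f 0 (τ k) * v / 2))
      atTop (𝓝 0) := by
    refine squeeze_zero_norm (fun k => h.abs_sqrt_sub_le (hτ k) hv (hε₀ k) (hint k) (hD k)) ?_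
    simpa using hε.mul_const (v + 1)
  have hprofile : Tendsto (fun k => √(f 0 (τ k)) * Real.exp (-f 0 (τ k) * v / 2)) atTop
      (𝓝 (√α * Real.exp (-α * v / 2))) :=
    hα.sqrt.mul ((hα.neg.mul_const v).div_const 2).rexp
  have hsq : (0 + √α * Real.exp (-α * v / 2)) ^ 2 = α * Real.exp (-α * v) := by
    rw [zero_add, mul_pow, Real.sq_sqrt hα₀, ← Real.exp_nat_mul]
    ring_nf
  rw [← hsq]
  refine ((hdiff.add hprofile).pow 2).congr fun k => ?_
  rw [sub_add_cancel, Real.sq_sqrt (h.pos v _ hv (hτ k)).le]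

/-- The profile estimate bounds `f` uniformly on `[0, R]`, so that
`R - μ ≤ ∫₀^R (R - v) f(v, τ k) dv` passes to the limit. -/
lemma eq_one_div_of_tendsto_f_zero (h : IsBDYFlow μ f ft fv fvv) (hτ : ∀ k, 0 ≤ τ k)
    (hε₀ : ∀ k, 0 < ε k) (hε : Tendsto ε atTop (𝓝 0))
    (hint : ∀ k, IntegrableOn
      (fun v => (fv v (τ k) + f 0 (τ k) * f v (τ k)) ^ 2 / f v (τ k)) (Ioi 0))
    (hD : ∀ k, entropyDissipation (fun v => f v (τ k)) (fun v => fv v (τ k)) ≤ ε k ^ 2)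
    (hM : ∀ k, f 0 (τ k) ≤ 1 / μ + ε k) (hα : Tendsto (fun k => f 0 (τ k)) atTop (𝓝 α)) :
    α = 1 / μ := by
  have hα₀ : 0 ≤ α := ge_of_tendsto' hα fun k => (h.pos 0 _ le_rfl (hτ k)).le
  refine le_antisymm (le_of_tendsto_of_tendsto' hα (by simpa using hε.const_add (1 / μ)) hM)
    (one_div_le_of_forall_sub_le_integral h.mean_pos hα₀ fun R hR => ?_)
  obtain ⟨E, hE⟩ := hε.bddAbove_range
  have hE : ∀ k, ε k ≤ E := fun k => hE (mem_range_self k)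
  refine ge_of_tendsto' (intervalIntegral.tendsto_integral_filter_of_dominated_convergence
    (F := fun k v => (R - v) * f v (τ k)) (l := atTop)
    (fun _ => R * (√(1 / μ + E) + E * (R + 1)) ^ 2) (.of_forall fun k => ?_)
    (.of_forall fun k => .of_forall fun v hv => ?_) intervalIntegrable_const
    (.of_forall fun v hv => ?_)) fun k => h.sub_mean_le_integral (hτ k) hR.le
  · rw [uIoc_of_le hR.le]
    exact (by fun_prop : Continuous fun v => R - v).aestronglyMeasurable.mul
      ((h.integrableOn _ (hτ k)).mono_set Ioc_subset_Ioi_self).aestronglyMeasurable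
  · rw [uIoc_of_le hR.le] at hv
    have hf := (h.pos v _ hv.1.le (hτ k)).le
    have ha := (h.pos 0 _ le_rfl (hτ k)).le
    have hexp : Real.exp (-f 0 (τ k) * v / 2) ≤ 1 :=
      Real.exp_le_one_iff.2 (by linarith [mul_nonneg ha hv.1.le])
    have hsqrt : √(f v (τ k)) ≤ √(1 / μ + E) + E * (R + 1) :=
      calc √(f v (τ k)) ≤ √(f 0 (τ k)) * Real.exp (-f 0 (τ k) * v / 2) + ε k * (v + 1) :=
            sub_le_iff_le_add'.1 ((le_abs_self _).trans
              (h.abs_sqrt_sub_le (hτ k) hv.1.le (hε₀ k) (hint k) (hD k)))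
        _ ≤ √(f 0 (τ k)) * 1 + ε k * (v + 1) := by gcongr
        _ ≤ √(1 / μ + E) + E * (R + 1) := by
            rw [mul_one]
            have := hv.1.le
            gcongr
            · exact (hM k).trans (by linarith [hE k])
            · exact (hε₀ k).le.trans (hE k)
            · exact hE k
            · exact hv.2
    rw [norm_mul, Real.norm_of_nonneg hf, Real.norm_of_nonneg (sub_nonneg.2 hv.2),
      ← Real.sq_sqrt hf]
    gcongr
    exact sub_le_self R hv.1.le
  · rw [uIoc_of_le hR.le] at hv
    exact (h.tendsto_mul_exp_of_dissipation_le hτ hε₀ hε hint hD hα hv.1.le).const_mul _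

end IsBDYFlow

lemma IsDissipativeBDYFlow.exists_tendsto_boltzmannGibbs {μ : ℝ} {f ft fv fvv : ℝ → ℝ → ℝ}
    (h : IsDissipativeBDYFlow μ f ft fv fvv) :
    ∃ τ : ℕ → ℝ, Tendsto τ atTop atTop ∧ (∀ k, 0 ≤ τ k) ∧
      ∀ v, 0 < v → Tendsto (fun k => f v (τ k)) atTop (𝓝 (boltzmannGibbs μ v)) := by
  set ε : ℕ → ℝ := fun k => 1 / (k + 1)
  have hε₀ : ∀ k, 0 < ε k := fun k => Nat.one_div_pos_of_nat
  have hε₁ : ∀ k, ε k ≤ 1 := fun k => div_le_self zero_le_one (by linarith [k.cast_nonneg (α := ℝ)])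
  have hε : Tendsto ε atTop (𝓝 0) := tendsto_one_div_add_atTop_nhds_zero_nat
  choose σ hσ hint hD hM using fun k : ℕ =>
    h.exists_entropyDissipation_le (pow_pos (hε₀ k) 2) (hε₀ k) k.cast_add_one_pos
  have hσ₀ : ∀ k, 0 ≤ σ k := fun k => k.cast_add_one_pos.le.trans (hσ k)
  have hσlim : Tendsto σ atTop atTop :=
    tendsto_atTop_mono hσ (tendsto_natCast_atTop_atTop.atTop_add tendsto_const_nhds)
  obtain ⟨α, -, ψ, hψ, hα⟩ := isCompact_Icc.tendsto_subseq (x := fun k => f 0 (σ k))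
    fun k => ⟨(h.pos 0 _ le_rfl (hσ₀ k)).le, (hM k).trans (add_le_add_right (hε₁ k) _)⟩
  have hψlim := hψ.tendsto_atTop
  refine ⟨σ ∘ ψ, hσlim.comp hψlim, fun k => hσ₀ _, fun v hv => ?_⟩
  have hα_eq : α = 1 / μ := h.eq_one_div_of_tendsto_f_zero (fun k => hσ₀ (ψ k))
    (fun k => hε₀ (ψ k)) (hε.comp hψlim) (fun k => hint _) (fun k => hD _) (fun k => hM _) hα
  have hlim := h.tendsto_mul_exp_of_dissipation_le (fun k => hσ₀ (ψ k)) (fun k => hε₀ (ψ k))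
    (hε.comp hψlim) (fun k => hint _) (fun k => hD _) hα hv.le
  simpa only [Function.comp_apply, boltzmannGibbs_eq_exp_mul, hα_eq, one_div] using hlim

end Limit

section Distances

/-- The Hellinger distance of two densities on `(0, ∞)`. -/
noncomputable def hellingerDist (u g : ℝ → ℝ) : ℝ :=
  √(∫ v in Ioi 0, (√(u v) - √(g v)) ^ 2)

/-- Scheffé's lemma: as the integrals agree, `∫ |u - g| = 2 ∫ (g - u)⁺`, and `(g - u)⁺` is
dominated by `g`. -/
lemma tendsto_integral_abs_sub_of_integral_eq {Ω ι : Type*} [MeasurableSpace Ω] {ν : Measure Ω}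
    {l : Filter ι} [l.IsCountablyGenerated] {g : Ω → ℝ} {u : ι → Ω → ℝ} (hg₀ : 0 ≤ᵐ[ν] g)
    (hg : Integrable g ν) (hu₀ : ∀ i, 0 ≤ᵐ[ν] u i) (hu : ∀ i, Integrable (u i) ν)
    (heq : ∀ i, ∫ x, u i x ∂ν = ∫ x, g x ∂ν)
    (hlim : ∀ᵐ x ∂ν, Tendsto (fun i => u i x) l (𝓝 (g x))) :
    Tendsto (fun i => ∫ x, |u i x - g x| ∂ν) l (𝓝 0) := by
  have hpart : ∀ i, Integrable (fun x => max (g x - u i x) 0) ν := fun i => (hg.sub (hu i)).pos_part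
  have habs : ∀ i, ∫ x, |u i x - g x| ∂ν = 2 * ∫ x, max (g x - u i x) 0 ∂ν := fun i => by
    have hsplit : ∀ x, |u i x - g x| = (u i x - g x) + 2 * max (g x - u i x) 0 := fun x => by
      rcases le_total (u i x) (g x) with hle | hle
      · rw [abs_of_nonpos (sub_nonpos.2 hle), max_eq_left (sub_nonneg.2 hle)]
        ring
      · rw [abs_of_nonneg (sub_nonneg.2 hle), max_eq_right (sub_nonpos.2 hle)]
        ring
    have hsub : Integrable (fun x => u i x - g x) ν := (hu i).sub hg
    simp_rw [hsplit]
    rw [integral_add hsub ((hpart i).const_mul 2), integral_sub (hu i) hg, heq i,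
      sub_self, zero_add, integral_const_mul]
  have hpartlim : Tendsto (fun i => ∫ x, max (g x - u i x) 0 ∂ν) l (𝓝 (∫ _, 0 ∂ν)) := by
    refine tendsto_integral_filter_of_dominated_convergence g
      (.of_forall fun i => (hpart i).aestronglyMeasurable) (.of_forall fun i => ?_) hg ?_
    · filter_upwards [hg₀, hu₀ i] with x hgx hux
      rw [Real.norm_of_nonneg (le_max_right _ _)]
      exact max_le (sub_le_self _ hux) hgx
    · filter_upwards [hlim] with x hx
      simpa using (hx.const_sub (g x)).max (tendsto_const_nhds (x := 0))
  simpa [habs] using hpartlim.const_mul 2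

lemma sq_sqrt_sub_sqrt_le {a b : ℝ} (ha : 0 ≤ a) (hb : 0 ≤ b) : (√a - √b) ^ 2 ≤ |a - b| := by
  have hle : |√a - √b| ≤ √a + √b := by
    rw [abs_le]
    constructor <;> linarith [a.sqrt_nonneg, b.sqrt_nonneg]
  calc (√a - √b) ^ 2 = |√a - √b| * |√a - √b| := by rw [sq, abs_mul_abs_self]
    _ ≤ |√a - √b| * |√a + √b| := by
      rw [abs_of_nonneg (add_nonneg a.sqrt_nonneg b.sqrt_nonneg)]
      gcongr
    _ = |a - b| := by
      rw [← abs_mul, mul_comm, ← sq_sub_sq, Real.sq_sqrt ha, Real.sq_sqrt hb]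

lemma hellingerDist_le_sqrt_integral_abs_sub {u g : ℝ → ℝ} (hu₀ : ∀ v, 0 < v → 0 ≤ u v)
    (hg₀ : ∀ v, 0 < v → 0 ≤ g v) (hu : IntegrableOn u (Ioi 0)) (hg : IntegrableOn g (Ioi 0)) :
    hellingerDist u g ≤ √(∫ v in Ioi 0, |u v - g v|) := by
  refine Real.sqrt_le_sqrt (integral_mono_of_nonneg (.of_forall fun v => sq_nonneg _)
    (hu.sub hg).abs ?_)
  filter_upwards [ae_restrict_mem measurableSet_Ioi] with v hv
  exact sq_sqrt_sub_sqrt_le (hu₀ v hv) (hg₀ v hv)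

end Distances

theorem BDY_PDE_L1_convergence_subsequence_general {μ : ℝ} {f ft fv fvv : ℝ → ℝ → ℝ}
    (h : IsDissipativeBDYFlow μ f ft fv fvv) :
    ∃ τ : ℕ → ℝ, Tendsto τ atTop atTop ∧
      Tendsto (fun k => hellingerDist (fun v => f v (τ k)) (boltzmannGibbs μ)) atTop (𝓝 0) ∧
      Tendsto (fun k => ∫ v in Ioi 0, |f v (τ k) - boltzmannGibbs μ v|) atTop (𝓝 0) := by
  obtain ⟨τ, hτ, hτ₀, hlim⟩ := h.exists_tendsto_boltzmannGibbs
  have hf₀ : ∀ k v, 0 < v → 0 ≤ f v (τ k) := fun k v hv => (h.pos v _ hv.le (hτ₀ k)).le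
  have hg₀ : ∀ v, 0 < v → 0 ≤ boltzmannGibbs μ v := fun v _ => (boltzmannGibbs_pos h.mean_pos v).le
  have hg := integrableOn_boltzmannGibbs h.mean_pos
  have hL1 : Tendsto (fun k => ∫ v in Ioi 0, |f v (τ k) - boltzmannGibbs μ v|) atTop (𝓝 0) :=
    tendsto_integral_abs_sub_of_integral_eq ((ae_restrict_mem measurableSet_Ioi).mono hg₀) hg
      (fun k => (ae_restrict_mem measurableSet_Ioi).mono (hf₀ k))
      (fun k => h.integrableOn _ (hτ₀ k))
      (fun k => (h.mass _ (hτ₀ k)).trans (integral_boltzmannGibbs h.mean_pos).symm)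
      ((ae_restrict_mem measurableSet_Ioi).mono hlim)
  exact ⟨τ, hτ, squeeze_zero (fun _ => Real.sqrt_nonneg _) (fun k =>
    hellingerDist_le_sqrt_integral_abs_sub (hf₀ k) hg₀ (h.integrableOn _ (hτ₀ k)) hg)
    (by simpa using hL1.sqrt), hL1⟩

/-- **Convergence to the Boltzmann–Gibbs equilibrium along a subsequence of times.**
Let `μ > 0`, `f∞(v) = (1/μ) e^{−v/μ}`, and let `f` be a strictly positive classical
solution of the BDY PDE which is for each `t` a probability density with mean `μ`,
satisfies the entropy dissipation identity `d/dt H[f|f∞](t) = −D[f](t)` for all `t ≥ 0`,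
and has finite initial relative entropy `H[f⁰|f∞] < ∞` where `f⁰ = f(·,0)`. Then there is
a sequence of times `τ_k → ∞` along which both the Hellinger distance
`d_H(f(·,τ_k), f∞) → 0` and the `L¹` distance `∫₀^∞ |f(v,τ_k) − f∞(v)| dv → 0`. -/
theorem BDY_PDE_L1_convergence_subsequence
    (μ : ℝ) (hμ : 0 < μ)
    (f ft fv fvv : ℝ → ℝ → ℝ)
    (hcont : ContinuousOn (fun p : ℝ × ℝ => f p.1 p.2) (Ici 0 ×ˢ Ici 0))
    (hfv : ∀ v t : ℝ, 0 ≤ v → 0 ≤ t → HasDerivAt (fun w => f w t) (fv v t) v)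
    (hfvv : ∀ v t : ℝ, 0 ≤ v → 0 ≤ t → HasDerivAt (fun w => fv w t) (fvv v t) v)
    (hft : ∀ v t : ℝ, 0 ≤ v → 0 ≤ t → HasDerivAt (fun s => f v s) (ft v t) t)
    (hpos : ∀ v t : ℝ, 0 ≤ v → 0 ≤ t → 0 < f v t)
    (hint : ∀ t : ℝ, 0 ≤ t → IntegrableOn (fun v => f v t) (Ioi 0))
    (hint_vf : ∀ t : ℝ, 0 ≤ t → IntegrableOn (fun v => v * f v t) (Ioi 0))
    (hmass : ∀ t : ℝ, 0 ≤ t → ∫ v in Ioi (0:ℝ), f v t = 1)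
    (hmean : ∀ t : ℝ, 0 ≤ t → ∫ v in Ioi (0:ℝ), v * f v t = μ)
    (hPDE : ∀ v t : ℝ, 0 < v → 0 ≤ t → ft v t = fvv v t + f 0 t * fv v t)
    (hBC : ∀ t : ℝ, 0 ≤ t → fv 0 t + (f 0 t) ^ 2 = 0)
    -- the relative entropy and the entropy dissipation functional
    (H D : ℝ → ℝ)
    (hHdef : ∀ t : ℝ, H t = ∫ v in Ioi (0:ℝ),
      f v t * Real.log (f v t / ((1 / μ) * Real.exp (-v / μ))))
    (hDdef : ∀ t : ℝ, D t = ∫ v in Ioi (0:ℝ), (fv v t + f 0 t * f v t) ^ 2 / f v t)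
    -- the relative entropy is finite (its integrand is integrable), in particular at t = 0
    (hHint : ∀ t : ℝ, 0 ≤ t → IntegrableOn
      (fun v => f v t * Real.log (f v t / ((1 / μ) * Real.exp (-v / μ)))) (Ioi 0))
    -- the entropy dissipation identity
    (hdiss : ∀ t : ℝ, 0 ≤ t → HasDerivAt H (-(D t)) t) :
    ∃ τ : ℕ → ℝ, Tendsto τ atTop atTop ∧
      Tendsto (fun k => Real.sqrt (∫ v in Ioi (0:ℝ),
        (Real.sqrt (f v (τ k)) - Real.sqrt ((1 / μ) * Real.exp (-v / μ))) ^ 2))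
        atTop (nhds 0) ∧
      Tendsto (fun k => ∫ v in Ioi (0:ℝ), |f v (τ k) - (1 / μ) * Real.exp (-v / μ)|)
        atTop (nhds 0) := by
  obtain rfl := funext hHdef
  obtain rfl := funext hDdef
  exact BDY_PDE_L1_convergence_subsequence_general
    ⟨⟨hcont, hfv, hfvv, hft, hpos, hint, hint_vf, hmass, hmean, hPDE⟩, hHint, hdiss⟩
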